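/- arXiv:1408.1587 — 4 statements merged into one kernel-verified Lean document; each statement's English description precedes it below -/
import Mathlib

section
/- Let Ω ⊂ ℝ² be a bounded domain with boundary of class C^{1,1}, and let C, c > 0 be constants. Suppose that for every τ > 0 and every compact set K ⊂ Ω with max{|K|, √|K|·τ} ≤ c there exists a bi-Lipschitz map φ_K : cl(Ω) → cl(Ω) with φ_K = id on ∂Ω, ‖φ_K − id‖_{W^{1,p}(Ω)} ≤ C|K|^{1/(2p)}τ for all 1 ≤ p ≤ ∞, ‖φ_K − id‖_{L^∞(Ω)} ≤ C|K|^{1/2}τ, |∇φ_K| ≤ C det ∇φ_K a.e. in Ω, det ∇φ_K ≥ 1+τ a.e. on K, and det ∇φ_K ≥ 1 − C|K|^{1/2}τ a.e. in Ω. Then there exists c' > 0 (with c' ≤ c, requiring in addition C√|M|τ to be sufficiently small) such that for every τ > 0 and every Lebesgue-measurable set M ⊂ Ω with max{|M|, √|M|·τ} ≤ c' there exists a bi-Lipschitz map φ : cl(Ω) → cl(Ω) satisfying the same six properties with K replaced by M and with the same constant C. -/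
/-!
The set `M` is exhausted, up to a null set, by an increasing sequence of compact sets `Kₙ`
(`exists_compact_exhaustion`), and the maps `φₙ` given for the `Kₙ` are shown to subconverge to a
map with the required properties for `M`.

*Compactness.* Extended by the identity, `φₙ` becomes a homeomorphism `Φₙ` of the plane. The
`W^{1,∞}` estimate makes `Φₙ - id` Lipschitz with constant `C τ`. The distortion bound
`|∇φₙ| ≤ C det ∇φₙ` and Cramer's rule give `‖(∇Φₙ)⁻¹‖ ≤ 2 C` as soon as the Jacobian is positive,
which is where the smallness of `C √|M| τ` is needed; hence the inverses are equi-Lipschitz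
(`GoodStretch.exists_planeStretch`). By Arzelà–Ascoli a subsequence converges uniformly, together
with the inverses, to a bi-Lipschitz `Φ` (`PlaneStretch.exists_subseq`).

*Norms.* Integration by parts shows that mollifications of `∇Φₙ` converge pointwise to those of
`∇Φ` (`mollify_fderiv_tendsto`), so `L^p` norms of `∇Φ - id` are lower semicontinuous
(`eLpNorm_le_liminf_of_mollify`).

*Lower Jacobian bounds.* The limit preserves orientation (`det_nonneg_ae`): the polynomial
`t ↦ ∫ det (id + t ∇f)`, with `f = Φ - id`, is constant since `id + t f` is a homeomorphism for
small `t`, and evaluation at `t = 1` gives `∫ det ∇Φ = |Ω| = ∫ |det ∇Φ|`. For a compact set `Q`,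
`Φₙ(Q)` is contained in any given neighbourhood of `Φ(Q)` for large `n`, so the area formula
transfers a bound `det ∇Φₙ ≥ a` to the limit (`det_ge_of_tendstoUniformly`).

*Distortion.* The change of variables `∫ ρ(x - y) det ∇Φₙ(y) dy = ∫ ρ(x - Φₙ⁻¹ z) dz` shows that
mollified Jacobians converge as well (`StretchLimit.mollify_det_tendsto`). The mollified inequality
`‖ρ * ∇Φₙ‖ ≤ C ρ * det ∇Φₙ` passes to the limit, first in `n`, then in the radius of `ρ`.
-/

open MeasureTheory Set
open scoped ENNReal NNReal

/-- `Ω ⊆ ℝ²` is a bounded domain (open, connected, bounded) whose boundary is of class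
`C^{1,1}`. -/
def IsC11Domain (Ω : Set (ℝ × ℝ)) : Prop :=
  IsOpen Ω ∧ IsConnected Ω ∧ Bornology.IsBounded Ω ∧
    ∃ F : ℝ × ℝ → ℝ, Differentiable ℝ F ∧
      (∃ L : ℝ≥0, LipschitzWith L (fun x => fderiv ℝ F x)) ∧
      Ω = {x | 0 < F x} ∧ frontier Ω = {x | F x = 0} ∧
      ∀ x ∈ frontier Ω, fderiv ℝ F x ≠ 0

/-- `φ` is a bi-Lipschitz map from `s` onto `s`, with inverse `ψ`. -/
def BiLipschitzOn (φ ψ : ℝ × ℝ → ℝ × ℝ) (s : Set (ℝ × ℝ)) : Prop :=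
  Set.BijOn φ s s ∧ Set.InvOn ψ φ s s ∧
    (∃ K : ℝ≥0, LipschitzOnWith K φ s) ∧ ∃ K : ℝ≥0, LipschitzOnWith K ψ s

/-- There is a bi-Lipschitz map `φ : cl Ω → cl Ω` which is the identity on `∂Ω`, stretches
`M` by the factor `1 + τ`, compresses by no more than `1 - C√|M| τ`, and satisfies the
`W^{1,p}` and `L^∞` estimates of Theorem 4 with constant `C`. -/
def GoodStretch (C : ℝ) (Ω : Set (ℝ × ℝ)) (τ : ℝ) (M : Set (ℝ × ℝ)) : Prop :=
  ∃ φ ψ : ℝ × ℝ → ℝ × ℝ,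
    BiLipschitzOn φ ψ (closure Ω) ∧
    (∀ x ∈ frontier Ω, φ x = x) ∧
    (∀ p : ℝ≥0∞, 1 ≤ p →
      eLpNorm (fun x => φ x - x) p (volume.restrict Ω) +
        eLpNorm (fun x => fderiv ℝ φ x - ContinuousLinearMap.id ℝ (ℝ × ℝ)) p
          (volume.restrict Ω) ≤
        ENNReal.ofReal (C * (volume M).toReal ^ (1 / (2 * p.toReal)) * τ)) ∧
    (eLpNorm (fun x => φ x - x) ⊤ (volume.restrict Ω) ≤
      ENNReal.ofReal (C * Real.sqrt (volume M).toReal * τ)) ∧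
    (∀ᵐ x ∂(volume.restrict Ω), ‖fderiv ℝ φ x‖ ≤ C * (fderiv ℝ φ x).det) ∧
    (∀ᵐ x ∂(volume.restrict M), 1 + τ ≤ (fderiv ℝ φ x).det) ∧
    (∀ᵐ x ∂(volume.restrict Ω),
      1 - C * Real.sqrt (volume M).toReal * τ ≤ (fderiv ℝ φ x).det)

open Filter Topology Metric

/-! ### Extension by zero and Lipschitz preliminaries -/

lemma lipschitz_extension_by_zero {Ω : Set (ℝ × ℝ)} {h : ℝ × ℝ → ℝ × ℝ} {K : ℝ≥0}
    (hK : LipschitzOnWith K h (closure Ω)) (h0 : ∀ x ∈ frontier Ω, h x = 0) :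
    LipschitzWith K ((closure Ω).indicator h) := by
  classical
  have key : ∀ x ∈ closure Ω, ∀ y ∉ closure Ω, dist (h x) 0 ≤ K * dist x y := by
    intro x hx y hy
    obtain ⟨z, hz, hzf⟩ : (segment ℝ x y ∩ frontier Ω).Nonempty := by
      by_cases hxi : x ∈ frontier Ω
      · exact ⟨x, left_mem_segment ℝ x y, hxi⟩
      have hxi' : x ∈ interior Ω := by
        by_contra hcon
        exact hxi ⟨hx, hcon⟩
      have := (convex_segment (𝕜 := ℝ) x y).isPreconnected
      by_contra hne
      rw [Set.not_nonempty_iff_eq_empty] at hne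
      have h2 := this (interior Ω) (closure Ω)ᶜ isOpen_interior isClosed_closure.isOpen_compl
        (by
          intro w hw
          by_cases hwc : w ∈ closure Ω
          · left
            by_contra hcon
            have : w ∈ segment ℝ x y ∩ frontier Ω := ⟨hw, hwc, hcon⟩
            rw [hne] at this
            exact this
          · exact Or.inr hwc)
        ⟨x, left_mem_segment ℝ x y, hxi'⟩ ⟨y, right_mem_segment ℝ x y, hy⟩
      obtain ⟨w, -, hw1, hw2⟩ := h2
      exact hw2 (subset_closure (interior_subset hw1))
    have h1 := hK.dist_le_mul x hx z (frontier_subset_closure hzf)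
    rw [h0 z hzf] at h1
    refine h1.trans (mul_le_mul_of_nonneg_left ?_ K.2)
    have := dist_add_dist_of_mem_segment hz
    linarith [dist_nonneg (x := z) (y := y)]
  refine LipschitzWith.of_dist_le_mul fun x y => ?_
  by_cases hx : x ∈ closure Ω <;> by_cases hy : y ∈ closure Ω
  · simpa [hx, hy] using hK.dist_le_mul x hx y hy
  · simpa [hx, hy] using key x hx y hy
  · rw [dist_comm, dist_comm x y]
    simpa [hx, hy] using key y hy x hx
  · simp only [hx, hy, not_false_eq_true, indicator_of_notMem, dist_self]
    positivity

lemma volume_image_null {f : ℝ × ℝ → ℝ × ℝ} {K : ℝ≥0} (hf : LipschitzWith K f)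
    {s : Set (ℝ × ℝ)} (hs : volume s = 0) : volume (f '' s) = 0 := by
  rw [← hausdorffMeasure_prod_real] at hs ⊢
  have := hf.hausdorffMeasure_image_le (d := 2) (by norm_num) s
  rw [hs, mul_zero] at this
  exact le_antisymm this bot_le

/-- Where a Lipschitz map vanishes, its derivative vanishes too, up to a null set. -/
lemma fderiv_eq_zero_ae_of_eq_zero {f : ℝ × ℝ → ℝ × ℝ} {K : ℝ≥0} (hf : LipschitzWith K f)
    {s : Set (ℝ × ℝ)} (hs : MeasurableSet s) (h0 : ∀ x ∈ s, f x = 0) :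
    ∀ᵐ x, x ∈ s → fderiv ℝ f x = 0 := by
  have hD : MeasurableSet {x | DifferentiableAt ℝ f x} := measurableSet_of_differentiableAt ℝ f
  have hap : ApproximatesLinearOn f (0 : ℝ × ℝ →L[ℝ] ℝ × ℝ)
      (s ∩ {x | DifferentiableAt ℝ f x}) 0 := by
    rintro x hx y hy
    simp [h0 x hx.1, h0 y hy.1]
  have h1 := hap.norm_fderiv_sub_le (volume) (hs.inter hD) (fderiv ℝ f)
    (fun x hx => hx.2.hasFDerivAt.hasFDerivWithinAt)
  rw [ae_restrict_iff' (hs.inter hD)] at h1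
  filter_upwards [h1, hf.ae_differentiableAt (μ := volume)] with x hx hdx hxs
  have := hx ⟨hxs, hdx⟩
  simpa using this

/-! ### Mollification -/

/-- The normalised bump kernel `ρ`, seen as a probability measure. -/
noncomputable def bumpMeasure (ρ : ContDiffBump (0 : ℝ × ℝ)) : Measure (ℝ × ℝ) :=
  volume.withDensity fun y => ENNReal.ofReal (ρ.normed volume y)

lemma measurable_bump (ρ : ContDiffBump (0 : ℝ × ℝ)) :
    Measurable fun y => ENNReal.ofReal (ρ.normed volume y) :=
  ENNReal.measurable_ofReal.comp ρ.continuous_normed.measurable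

instance (ρ : ContDiffBump (0 : ℝ × ℝ)) : IsProbabilityMeasure (bumpMeasure ρ) := by
  refine ⟨?_⟩
  rw [bumpMeasure, withDensity_apply _ MeasurableSet.univ, Measure.restrict_univ,
    ← ofReal_integral_eq_lintegral_ofReal ρ.integrable_normed
      (Eventually.of_forall ρ.nonneg_normed), ρ.integral_normed, ENNReal.ofReal_one]

/-- The mollification of `G` with kernel `ρ`. -/
noncomputable def mollify {F : Type*} [NormedAddCommGroup F] [NormedSpace ℝ F]
    (ρ : ContDiffBump (0 : ℝ × ℝ)) (G : ℝ × ℝ → F) (x : ℝ × ℝ) : F :=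
  ∫ y, G (x - y) ∂(bumpMeasure ρ)

lemma mollify_eq {F : Type*} [NormedAddCommGroup F] [NormedSpace ℝ F]
    (ρ : ContDiffBump (0 : ℝ × ℝ)) (G : ℝ × ℝ → F) (x : ℝ × ℝ) :
    mollify ρ G x = ∫ y, ρ.normed volume y • G (x - y) := by
  rw [mollify, bumpMeasure, integral_withDensity_eq_integral_toReal_smul (measurable_bump ρ)
    (Eventually.of_forall fun _ => ENNReal.ofReal_lt_top)]
  congr 1
  ext y
  rw [ENNReal.toReal_ofReal (ρ.nonneg_normed y)]

lemma mollify_eq' {F : Type*} [NormedAddCommGroup F] [NormedSpace ℝ F]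
    (ρ : ContDiffBump (0 : ℝ × ℝ)) (G : ℝ × ℝ → F) (x : ℝ × ℝ) :
    mollify ρ G x = ∫ y, ρ.normed volume (x - y) • G y := by
  rw [mollify_eq, ← integral_sub_left_eq_self _ _ x]
  simp

lemma bumpMeasure_ac (ρ : ContDiffBump (0 : ℝ × ℝ)) : bumpMeasure ρ ≪ volume :=
  withDensity_absolutelyContinuous _ _

lemma ae_bumpMeasure_sub {ρ : ContDiffBump (0 : ℝ × ℝ)} {P : ℝ × ℝ → Prop} (h : ∀ᵐ x, P x)
    (x : ℝ × ℝ) : ∀ᵐ y ∂(bumpMeasure ρ), P (x - y) := by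
  refine (bumpMeasure_ac ρ).ae_le ?_
  exact (quasiMeasurePreserving_sub_left volume x).ae h

/-- A sequence of kernels concentrating at the origin. -/
noncomputable def bumpSeq (i : ℕ) : ContDiffBump (0 : ℝ × ℝ) where
  rIn := 1 / (i + 1)
  rOut := 2 * (1 / (i + 1))
  rIn_pos := by positivity
  rIn_lt_rOut := by
    have : (0 : ℝ) < 1 / (i + 1) := by positivity
    linarith

lemma tendsto_bumpSeq : Tendsto (fun i => (bumpSeq i).rOut) atTop (𝓝 0) := by
  have := (tendsto_one_div_add_atTop_nhds_zero_nat (𝕜 := ℝ)).const_mul 2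
  simpa [bumpSeq] using this

lemma mollify_tendsto_ae {F : Type*} [NormedAddCommGroup F] [NormedSpace ℝ F] [CompleteSpace F]
    {G : ℝ × ℝ → F} (hG : LocallyIntegrable G volume) :
    ∀ᵐ x, Tendsto (fun i => mollify (bumpSeq i) G x) atTop (𝓝 (G x)) := by
  have := ContDiffBump.ae_convolution_tendsto_right_of_locallyIntegrable (μ := volume)
    (K := 2) tendsto_bumpSeq (Eventually.of_forall fun i => le_refl _) hG
  filter_upwards [this] with x hx
  convert hx using 2 with i
  rw [mollify_eq]
  rfl

lemma ae_bumpMeasure_norm_le (ρ : ContDiffBump (0 : ℝ × ℝ)) :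
    ∀ᵐ y ∂(bumpMeasure ρ), ‖y‖ < ρ.rOut := by
  rw [bumpMeasure, ae_withDensity_iff (measurable_bump ρ)]
  refine Eventually.of_forall fun y hy => ?_
  by_contra hcon
  apply hy
  have : y ∉ Function.support (ρ.normed volume) := by
    rw [ρ.support_normed_eq]
    simpa using hcon
  simp [Function.notMem_support.1 this]

/-- Differentiating the mollification of a Lipschitz map mollifies its derivative. -/
lemma hasFDerivAt_mollify {f : ℝ × ℝ → ℝ × ℝ} {K : ℝ≥0} (hf : LipschitzWith K f)
    (ρ : ContDiffBump (0 : ℝ × ℝ)) (x : ℝ × ℝ) :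
    HasFDerivAt (mollify ρ f) (mollify ρ (fderiv ℝ f) x) x := by
  have hintg : Integrable (fun y => f (x - y)) (bumpMeasure ρ) := by
    refine Integrable.of_bound (C := ‖f x‖ + K * ρ.rOut)
      (hf.continuous.comp (continuous_const.sub continuous_id)).aestronglyMeasurable ?_
    filter_upwards [ae_bumpMeasure_norm_le ρ] with y hy
    have h1 := hf.norm_sub_le (x - y) x
    have h2 : ‖x - y - x‖ = ‖y‖ := by simp
    rw [h2] at h1
    have h3 := norm_le_norm_add_norm_sub' (f (x - y)) (f x)
    have h4 : (K : ℝ) * ‖y‖ ≤ K * ρ.rOut := mul_le_mul_of_nonneg_left hy.le K.2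
    linarith
  refine (hasFDerivAt_integral_of_dominated_loc_of_lip (F := fun x y => f (x - y))
    (F' := fun y => fderiv ℝ f (x - y)) (bound := fun _ => (K : ℝ)) univ_mem ?_ hintg ?_ ?_ ?_ ?_).2
  · exact Eventually.of_forall fun z =>
      (hf.continuous.comp (continuous_const.sub continuous_id)).aestronglyMeasurable
  · exact ((measurable_fderiv ℝ f).comp (measurable_const.sub measurable_id)).aestronglyMeasurable
  · refine Eventually.of_forall fun y => ?_
    rw [lipschitzOnWith_univ]
    refine LipschitzWith.of_dist_le_mul fun a b => ?_
    have := hf.dist_le_mul (a - y) (b - y)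
    simpa using this
  · exact integrable_const _
  · filter_upwards [ae_bumpMeasure_sub (ρ := ρ) (hf.ae_differentiableAt (μ := volume)) x] with y hy
    have h1 : HasFDerivAt (fun z => z - y) (ContinuousLinearMap.id ℝ (ℝ × ℝ)) x :=
      (hasFDerivAt_id x).sub_const y
    have h2 : HasFDerivAt (fun z => f (z - y))
        ((fderiv ℝ f (x - y)).comp (ContinuousLinearMap.id ℝ (ℝ × ℝ))) x :=
      hy.hasFDerivAt.comp x h1
    simpa using h2

lemma mollify_sub_le {f : ℝ × ℝ → ℝ × ℝ} {K : ℝ≥0} (hf : LipschitzWith K f)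
    (ρ : ContDiffBump (0 : ℝ × ℝ)) (x : ℝ × ℝ) : ‖mollify ρ f x - f x‖ ≤ K * ρ.rOut := by
  have h1 : ∀ᵐ y ∂(bumpMeasure ρ), ‖f (x - y) - f x‖ ≤ K * ρ.rOut := by
    filter_upwards [ae_bumpMeasure_norm_le ρ] with y hy
    refine (hf.norm_sub_le _ _).trans ?_
    simpa using mul_le_mul_of_nonneg_left hy.le K.2
  have hintg' : Integrable (fun y => f (x - y) - f x) (bumpMeasure ρ) :=
    Integrable.of_bound ((hf.continuous.comp (continuous_const.sub
      continuous_id)).sub continuous_const).aestronglyMeasurable _ h1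
  have hintg : Integrable (fun y => f (x - y)) (bumpMeasure ρ) := by
    refine (hintg'.add (integrable_const (f x))).congr (Eventually.of_forall fun y => ?_)
    simp
  have h2 : mollify ρ f x - f x = ∫ y, (f (x - y) - f x) ∂(bumpMeasure ρ) := by
    rw [integral_sub hintg (integrable_const _)]
    simp [mollify]
  rw [h2]
  simpa using norm_integral_le_of_norm_le_const h1

/-- The Lipschitz constant of a Lipschitz map of the plane is the essential supremum of the norm
of its derivative. -/
lemma lipschitzWith_of_ae_fderiv_le {f : ℝ × ℝ → ℝ × ℝ} {K L : ℝ≥0} (hf : LipschitzWith K f)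
    (hL : ∀ᵐ x, ‖fderiv ℝ f x‖ ≤ L) : LipschitzWith L f := by
  have hm : ∀ i, LipschitzWith L (mollify (bumpSeq i) f) := by
    intro i
    refine lipschitzWith_of_nnnorm_fderiv_le (𝕜 := ℝ)
      (fun x => (hasFDerivAt_mollify hf _ x).differentiableAt) fun x => ?_
    rw [(hasFDerivAt_mollify hf _ x).fderiv, ← NNReal.coe_le_coe, coe_nnnorm]
    simpa [mollify] using
      norm_integral_le_of_norm_le_const (ae_bumpMeasure_sub (ρ := bumpSeq i) hL x)
  have ht : ∀ x, Tendsto (fun i => mollify (bumpSeq i) f x) atTop (𝓝 (f x)) := by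
    intro x
    rw [tendsto_iff_norm_sub_tendsto_zero]
    refine squeeze_zero (fun _ => norm_nonneg _) (fun i => mollify_sub_le hf (bumpSeq i) x) ?_
    simpa using tendsto_bumpSeq.const_mul (K : ℝ)
  refine LipschitzWith.of_dist_le_mul fun x y => ?_
  exact le_of_tendsto ((ht x).dist (ht y)) (Eventually.of_forall fun i => (hm i).dist_le_mul x y)

/-! ### Weak lower semicontinuity of the norm of the derivative -/

/-- Mollification does not increase `L^p` norms (Jensen's inequality and Tonelli's theorem). -/
lemma eLpNorm_mollify_le {F : Type*} [NormedAddCommGroup F] [NormedSpace ℝ F]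
    (ρ : ContDiffBump (0 : ℝ × ℝ)) {G : ℝ × ℝ → F} (hG : StronglyMeasurable G)
    {p : ℝ≥0∞} (hp : 1 ≤ p) : eLpNorm (mollify ρ G) p volume ≤ eLpNorm G p volume := by
  have hGx : ∀ x, StronglyMeasurable fun y => G (x - y) := fun x =>
    hG.comp_measurable (measurable_const.sub measurable_id)
  by_cases hpt : p = ⊤
  · subst hpt
    rw [eLpNorm_exponent_top, eLpNorm_exponent_top]
    refine eLpNormEssSup_le_of_ae_enorm_bound (Eventually.of_forall fun x => ?_)
    refine (enorm_integral_le_lintegral_enorm _).trans ?_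
    refine (lintegral_mono_ae (ae_bumpMeasure_sub
      (enorm_ae_le_eLpNormEssSup G volume) x)).trans ?_
    simp
  have hp0 : p ≠ 0 := (zero_lt_one.trans_le hp).ne'
  have hpr : 0 < p.toReal := ENNReal.toReal_pos hp0 hpt
  rw [eLpNorm_eq_lintegral_rpow_enorm_toReal hp0 hpt, eLpNorm_eq_lintegral_rpow_enorm_toReal hp0 hpt]
  refine ENNReal.rpow_le_rpow ?_ (by positivity)
  have h1 : ∀ x, ‖mollify ρ G x‖ₑ ^ p.toReal ≤
      ∫⁻ y, ‖G (x - y)‖ₑ ^ p.toReal ∂(bumpMeasure ρ) := by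
    intro x
    have h2 : ‖mollify ρ G x‖ₑ ≤ eLpNorm (fun y => G (x - y)) p (bumpMeasure ρ) := by
      refine (enorm_integral_le_lintegral_enorm _).trans ?_
      rw [← eLpNorm_one_eq_lintegral_enorm]
      exact eLpNorm_le_eLpNorm_of_exponent_le hp (hGx x).aestronglyMeasurable
    rw [eLpNorm_eq_lintegral_rpow_enorm_toReal hp0 hpt] at h2
    have h3 := ENNReal.rpow_le_rpow h2 hpr.le
    rwa [← ENNReal.rpow_mul, one_div, inv_mul_cancel₀ hpr.ne', ENNReal.rpow_one] at h3
  refine (lintegral_mono h1).trans ?_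
  rw [lintegral_lintegral_swap]
  · have h4 : ∀ y : ℝ × ℝ, ∫⁻ x, ‖G (x - y)‖ₑ ^ p.toReal = ∫⁻ x, ‖G x‖ₑ ^ p.toReal := fun y =>
      lintegral_sub_right_eq_self (μ := volume) (fun x => ‖G x‖ₑ ^ p.toReal) y
    simp_rw [h4]
    simp
  · have : Measurable fun q : (ℝ × ℝ) × (ℝ × ℝ) => ‖G (q.1 - q.2)‖ₑ ^ p.toReal :=
      (hG.enorm.comp (measurable_fst.sub measurable_snd)).pow_const _
    exact this.aemeasurable

lemma stronglyMeasurable_mollify {F : Type*} [NormedAddCommGroup F] [NormedSpace ℝ F]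
    (ρ : ContDiffBump (0 : ℝ × ℝ)) {G : ℝ × ℝ → F} (hG : StronglyMeasurable G) :
    StronglyMeasurable (mollify ρ G) := by
  have : StronglyMeasurable fun q : (ℝ × ℝ) × (ℝ × ℝ) => G (q.1 - q.2) :=
    hG.comp_measurable (measurable_fst.sub measurable_snd)
  exact this.integral_prod_right

/-- If the mollifications of `G n` converge pointwise to those of `g`, then `L^p` norms are lower
semicontinuous along the sequence. -/
lemma eLpNorm_le_liminf_of_mollify {F : Type*} [NormedAddCommGroup F] [NormedSpace ℝ F]
    [CompleteSpace F] {G : ℕ → ℝ × ℝ → F} {g : ℝ × ℝ → F} (hG : ∀ n, StronglyMeasurable (G n))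
    (hg : StronglyMeasurable g) (hgl : LocallyIntegrable g volume)
    (h : ∀ ρ x, Tendsto (fun n => mollify ρ (G n) x) atTop (𝓝 (mollify ρ g x)))
    {p : ℝ≥0∞} (hp : 1 ≤ p) :
    eLpNorm g p volume ≤ liminf (fun n => eLpNorm (G n) p volume) atTop := by
  refine (Lp.eLpNorm_lim_le_liminf_eLpNorm (f := fun i => mollify (bumpSeq i) g)
    (fun i => (stronglyMeasurable_mollify _ hg).aestronglyMeasurable) g
    (mollify_tendsto_ae hgl)).trans ?_
  refine liminf_le_of_le (by isBoundedDefault) fun b hb => ?_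
  obtain ⟨i, hi⟩ := hb.exists
  refine hi.trans ?_
  refine (Lp.eLpNorm_lim_le_liminf_eLpNorm (f := fun n => mollify (bumpSeq i) (G n))
    (fun n => (stronglyMeasurable_mollify _ (hG n)).aestronglyMeasurable) _
    (Eventually.of_forall (h _))).trans ?_
  exact liminf_le_liminf (Eventually.of_forall fun n => eLpNorm_mollify_le _ (hG n) hp)

lemma norm_clm_le (T : ℝ × ℝ →L[ℝ] ℝ × ℝ) : ‖T‖ ≤ ‖T (1, 0)‖ + ‖T (0, 1)‖ := by
  refine T.opNorm_le_bound (by positivity) fun x => ?_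
  have hx : T x = x.1 • T (1, 0) + x.2 • T (0, 1) := by
    rw [← map_smul, ← map_smul, ← map_add]
    congr 1
    ext <;> simp
  rw [hx]
  refine (norm_add_le _ _).trans ?_
  rw [norm_smul, norm_smul, add_mul]
  have h1 := norm_fst_le x
  have h2 := norm_snd_le x
  have := mul_le_mul_of_nonneg_right h1 (norm_nonneg (T (1, 0)))
  have := mul_le_mul_of_nonneg_right h2 (norm_nonneg (T (0, 1)))
  linarith

lemma clm_tendsto {T : ℕ → ℝ × ℝ →L[ℝ] ℝ × ℝ} {S : ℝ × ℝ →L[ℝ] ℝ × ℝ}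
    (h : ∀ v, Tendsto (fun n => T n v) atTop (𝓝 (S v))) : Tendsto T atTop (𝓝 S) := by
  rw [tendsto_iff_norm_sub_tendsto_zero]
  refine squeeze_zero (fun _ => norm_nonneg _) (fun n => norm_clm_le _) ?_
  have h1 := tendsto_iff_norm_sub_tendsto_zero.1 (h (1, 0))
  have h2 := tendsto_iff_norm_sub_tendsto_zero.1 (h (0, 1))
  simpa using h1.add h2

lemma norm_fderiv_le' {f : ℝ × ℝ → ℝ × ℝ} {K : ℝ≥0} (hf : LipschitzWith K f) (x : ℝ × ℝ) :
    ‖fderiv ℝ f x‖ ≤ K := norm_fderiv_le_of_lipschitz ℝ hf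

lemma stronglyMeasurable_fderiv' (f : ℝ × ℝ → ℝ × ℝ) : StronglyMeasurable (fderiv ℝ f) :=
  (measurable_fderiv ℝ f).stronglyMeasurable

lemma locallyIntegrable_fderiv {f : ℝ × ℝ → ℝ × ℝ} {K : ℝ≥0} (hf : LipschitzWith K f) :
    LocallyIntegrable (fderiv ℝ f) volume := by
  have : MemLp (fderiv ℝ f) ⊤ volume :=
    memLp_top_of_bound (stronglyMeasurable_fderiv' f).aestronglyMeasurable K
      (Eventually.of_forall (norm_fderiv_le' hf))
  exact this.locallyIntegrable le_top

lemma integrable_mollify_fderiv {f : ℝ × ℝ → ℝ × ℝ} {K : ℝ≥0} (hf : LipschitzWith K f)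
    (ρ : ContDiffBump (0 : ℝ × ℝ)) (x : ℝ × ℝ) :
    Integrable (fun y => ρ.normed volume (x - y) • fderiv ℝ f y) volume := by
  have h1 : Integrable (fun y => ρ.normed volume (x - y)) volume :=
    ρ.integrable_normed.comp_sub_left x
  refine h1.smul_bdd K (stronglyMeasurable_fderiv' f).aestronglyMeasurable ?_
  exact Eventually.of_forall (norm_fderiv_le' hf)

/-- Integration by parts: a component of the mollified derivative only depends on the values of
the map, not on its derivative. -/
lemma mollify_fderiv_apply {f : ℝ × ℝ → ℝ × ℝ} {K : ℝ≥0} (hf : LipschitzWith K f)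
    (ρ : ContDiffBump (0 : ℝ × ℝ)) (x v : ℝ × ℝ) (l : ℝ × ℝ →L[ℝ] ℝ) :
    l (mollify ρ (fderiv ℝ f) x v) =
      ∫ y, lineDeriv ℝ (fun y => ρ.normed volume (x - y)) y (-v) * l (f y) := by
  have hsm : ContDiff ℝ 1 (fun y => ρ.normed volume (x - y)) :=
    (ρ.contDiff_normed (n := 1)).comp (contDiff_const.sub contDiff_id)
  have hcs : HasCompactSupport (fun y => ρ.normed volume (x - y)) :=
    (ρ.hasCompactSupport_normed (μ := volume)).comp_homeomorph (Homeomorph.subLeft x)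
  obtain ⟨D, hD⟩ := hsm.lipschitzWith_of_hasCompactSupport hcs one_ne_zero
  have hlf : LipschitzWith (‖l‖₊ * K) (fun y => l (f y)) := l.lipschitz.comp hf
  rw [← hlf.integral_lineDeriv_mul_eq hD hcs v, mollify_eq']
  have h1 : l ((∫ y, ρ.normed volume (x - y) • fderiv ℝ f y) v) =
      (l.comp (ContinuousLinearMap.apply ℝ (ℝ × ℝ) v))
        (∫ y, ρ.normed volume (x - y) • fderiv ℝ f y) := rfl
  rw [h1, ← ContinuousLinearMap.integral_comp_comm _ (integrable_mollify_fderiv hf ρ x)]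
  refine integral_congr_ae ?_
  filter_upwards [hf.ae_differentiableAt (μ := volume)] with y hy
  have h2 : HasFDerivAt (fun y => l (f y)) (l.comp (fderiv ℝ f y)) y :=
    l.hasFDerivAt.comp y hy.hasFDerivAt
  rw [(h2.hasLineDerivAt v).lineDeriv]
  simp [mul_comm]

/-- Uniformly bounded, uniformly Lipschitz, pointwise convergent maps have weakly convergent
derivatives. -/
lemma mollify_fderiv_tendsto {f : ℕ → ℝ × ℝ → ℝ × ℝ} {g : ℝ × ℝ → ℝ × ℝ} {K : ℝ≥0} {R : ℝ}
    (hf : ∀ n, LipschitzWith K (f n)) (hg : LipschitzWith K g) (hR : ∀ n x, ‖f n x‖ ≤ R)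
    (h : ∀ x, Tendsto (fun n => f n x) atTop (𝓝 (g x))) (ρ : ContDiffBump (0 : ℝ × ℝ))
    (x : ℝ × ℝ) :
    Tendsto (fun n => mollify ρ (fderiv ℝ (f n)) x) atTop (𝓝 (mollify ρ (fderiv ℝ g) x)) := by
  refine clm_tendsto fun v => ?_
  have hsm : ContDiff ℝ 1 (fun y => ρ.normed volume (x - y)) :=
    (ρ.contDiff_normed (n := 1)).comp (contDiff_const.sub contDiff_id)
  have hcs : HasCompactSupport (fun y => ρ.normed volume (x - y)) :=
    (ρ.hasCompactSupport_normed (μ := volume)).comp_homeomorph (Homeomorph.subLeft x)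
  have hld : ∀ y, lineDeriv ℝ (fun y => ρ.normed volume (x - y)) y (-v) =
      fderiv ℝ (fun y => ρ.normed volume (x - y)) y (-v) := fun y =>
    ((hsm.differentiable one_ne_zero y).hasFDerivAt.hasLineDerivAt (-v)).lineDeriv
  have hintg : Integrable (fun y => lineDeriv ℝ (fun y => ρ.normed volume (x - y)) y (-v))
      volume := by
    simp_rw [hld]
    refine Continuous.integrable_of_hasCompactSupport ?_ (hcs.fderiv_apply ℝ (-v))
    exact (hsm.continuous_fderiv one_ne_zero).clm_apply continuous_const
  have key : ∀ l : ℝ × ℝ →L[ℝ] ℝ, Tendsto (fun n => l (mollify ρ (fderiv ℝ (f n)) x v)) atTop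
      (𝓝 (l (mollify ρ (fderiv ℝ g) x v))) := by
    intro l
    simp_rw [fun n => mollify_fderiv_apply (hf n) ρ x v l, mollify_fderiv_apply hg ρ x v l]
    refine tendsto_integral_of_dominated_convergence
      (fun y => ‖lineDeriv ℝ (fun y => ρ.normed volume (x - y)) y (-v)‖ * (‖l‖ * R)) ?_ ?_ ?_ ?_
    · exact fun n => hintg.aestronglyMeasurable.mul
        (l.continuous.comp (hf n).continuous).aestronglyMeasurable
    · exact hintg.norm.mul_const _
    · refine fun n => Eventually.of_forall fun y => ?_
      rw [norm_mul]
      refine mul_le_mul_of_nonneg_left ?_ (norm_nonneg _)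
      exact (l.le_opNorm _).trans (mul_le_mul_of_nonneg_left (hR n y) (norm_nonneg _))
    · exact Eventually.of_forall fun y =>
        ((l.continuous.tendsto _).comp (h y)).const_mul _
  exact (key (ContinuousLinearMap.fst ℝ ℝ ℝ)).prodMk_nhds (key (ContinuousLinearMap.snd ℝ ℝ ℝ))

/-! ### Determinants of plane linear maps -/

lemma det_formula (A : ℝ × ℝ →L[ℝ] ℝ × ℝ) :
    A.det = (A (1, 0)).1 * (A (0, 1)).2 - (A (0, 1)).1 * (A (1, 0)).2 := by
  rw [ContinuousLinearMap.det, ← LinearMap.det_toMatrix (Module.Basis.finTwoProd ℝ),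
    Matrix.det_fin_two]
  simp [LinearMap.toMatrix_apply]

lemma abs_coord_le (A : ℝ × ℝ →L[ℝ] ℝ × ℝ) :
    |(A (1, 0)).1| ≤ ‖A‖ ∧ |(A (1, 0)).2| ≤ ‖A‖ ∧ |(A (0, 1)).1| ≤ ‖A‖ ∧ |(A (0, 1)).2| ≤ ‖A‖ := by
  have h1 : ‖A (1, 0)‖ ≤ ‖A‖ := by simpa using A.le_opNorm (1, 0)
  have h2 : ‖A (0, 1)‖ ≤ ‖A‖ := by simpa using A.le_opNorm (0, 1)
  exact ⟨(norm_fst_le _).trans h1, (norm_snd_le _).trans h1, (norm_fst_le _).trans h2,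
    (norm_snd_le _).trans h2⟩

/-- Cramer's rule `det A • w = adj A (A w)`, with the bound `‖adj A‖ ≤ 2 ‖A‖`. -/
lemma det_mul_norm_le (A : ℝ × ℝ →L[ℝ] ℝ × ℝ) (w : ℝ × ℝ) :
    A.det * ‖w‖ ≤ 2 * ‖A‖ * ‖A w‖ := by
  obtain ⟨h1, h2, h3, h4⟩ := abs_coord_le A
  have hw : A w = w.1 • A (1, 0) + w.2 • A (0, 1) := by
    rw [← map_smul, ← map_smul, ← map_add]
    congr 1
    ext <;> simp
  have e1 : A.det * w.1 = (A (0, 1)).2 * (A w).1 - (A (0, 1)).1 * (A w).2 := by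
    rw [det_formula, hw]
    simp
    ring
  have e2 : A.det * w.2 = (A (1, 0)).1 * (A w).2 - (A (1, 0)).2 * (A w).1 := by
    rw [det_formula, hw]
    simp
    ring
  have k1 : |(A w).1| ≤ ‖A w‖ := norm_fst_le (A w)
  have k2 : |(A w).2| ≤ ‖A w‖ := norm_snd_le (A w)
  have b : ∀ p q r s : ℝ, |p| ≤ ‖A‖ → |q| ≤ ‖A w‖ → |r| ≤ ‖A‖ → |s| ≤ ‖A w‖ →
      |p * q - r * s| ≤ 2 * ‖A‖ * ‖A w‖ := by
    intro p q r s hp hq hr hs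
    have i1 : |p * q| ≤ ‖A‖ * ‖A w‖ := by
      rw [abs_mul]
      exact mul_le_mul hp hq (abs_nonneg _) (norm_nonneg _)
    have i2 : |r * s| ≤ ‖A‖ * ‖A w‖ := by
      rw [abs_mul]
      exact mul_le_mul hr hs (abs_nonneg _) (norm_nonneg _)
    have i3 := abs_sub (p * q) (r * s)
    linarith
  rcases max_choice ‖w.1‖ ‖w.2‖ with hm | hm
  · rw [Prod.norm_def, hm]
    calc A.det * ‖w.1‖ ≤ |A.det| * |w.1| :=
          mul_le_mul_of_nonneg_right (le_abs_self _) (norm_nonneg _)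
      _ = |A.det * w.1| := (abs_mul _ _).symm
      _ ≤ _ := by
        rw [e1]
        exact b _ _ _ _ h4 k1 h3 k2
  · rw [Prod.norm_def, hm]
    calc A.det * ‖w.2‖ ≤ |A.det| * |w.2| :=
          mul_le_mul_of_nonneg_right (le_abs_self _) (norm_nonneg _)
      _ = |A.det * w.2| := (abs_mul _ _).symm
      _ ≤ _ := by
        rw [e2]
        exact b _ _ _ _ h1 k2 h2 k1

lemma abs_det_le (A : ℝ × ℝ →L[ℝ] ℝ × ℝ) : |A.det| ≤ 2 * ‖A‖ * ‖A‖ := by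
  obtain ⟨h1, h2, h3, h4⟩ := abs_coord_le A
  rw [det_formula]
  have i1 := mul_le_mul h1 h4 (abs_nonneg _) (norm_nonneg _)
  have i2 := mul_le_mul h3 h2 (abs_nonneg _) (norm_nonneg _)
  rw [← abs_mul] at i1 i2
  have i3 := abs_sub ((A (1, 0)).1 * (A (0, 1)).2) ((A (0, 1)).1 * (A (1, 0)).2)
  linarith

lemma det_id_add_smul (A : ℝ × ℝ →L[ℝ] ℝ × ℝ) (t : ℝ) :
    (ContinuousLinearMap.id ℝ (ℝ × ℝ) + t • A).det =
      1 + t * ((A (1, 0)).1 + (A (0, 1)).2) + t ^ 2 * A.det := by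
  simp only [det_formula]
  simp
  ring

lemma measurable_det_fderiv (f : ℝ × ℝ → ℝ × ℝ) : Measurable fun x => (fderiv ℝ f x).det :=
  ContinuousLinearMap.continuous_det.measurable.comp (measurable_fderiv ℝ f)

/-! ### The area formula and the sign of the Jacobian -/

lemma area_formula {f : ℝ × ℝ → ℝ × ℝ} {K : ℝ≥0} (hf : LipschitzWith K f)
    (hinj : Function.Injective f) {s : Set (ℝ × ℝ)} (hs : MeasurableSet s) :
    ∫⁻ x in s, ENNReal.ofReal |(fderiv ℝ f x).det| = volume (f '' s) := by
  have hD : MeasurableSet {x | DifferentiableAt ℝ f x} := measurableSet_of_differentiableAt ℝ f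
  have hae : ∀ᵐ x, DifferentiableAt ℝ f x := hf.ae_differentiableAt (μ := volume)
  have h0 : volume (s \ {x | DifferentiableAt ℝ f x}) = 0 :=
    measure_mono_null (fun x hx => hx.2) (ae_iff.1 hae)
  have h1 := lintegral_abs_det_fderiv_eq_addHaar_image volume (hs.inter hD)
    (fun x hx => hx.2.hasFDerivAt.hasFDerivWithinAt) (hinj.injOn (s := s ∩ _))
  have h2 : volume (f '' s) = volume (f '' (s ∩ {x | DifferentiableAt ℝ f x})) := by
    refine le_antisymm ?_ (measure_mono (image_mono inter_subset_left))
    conv_lhs => rw [← inter_union_sdiff s {x | DifferentiableAt ℝ f x}, image_union]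
    refine (measure_union_le _ _).trans ?_
    rw [volume_image_null hf h0, add_zero]
  rw [h2, ← h1]
  refine setLIntegral_congr ?_
  refine (ae_eq_set.2 ⟨?_, ?_⟩)
  · simpa using h0
  · simp [sdiff_eq_empty.2 (inter_subset_left (s := s))]

lemma image_eq_of_id_off {f : ℝ × ℝ → ℝ × ℝ} (hinj : Function.Injective f)
    (hsurj : Function.Surjective f) {B : Set (ℝ × ℝ)} (h : ∀ x ∉ B, f x = x) : f '' B = B := by
  ext y
  constructor
  · rintro ⟨x, hx, rfl⟩
    by_contra hcon
    have := hinj (h _ hcon)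
    rw [this] at hcon
    exact hcon hx
  · intro hy
    obtain ⟨x, rfl⟩ := hsurj y
    refine ⟨x, ?_, rfl⟩
    by_contra hcon
    rw [h x hcon] at hy
    exact hcon hy

lemma integral_abs_det {f : ℝ × ℝ → ℝ × ℝ} {K : ℝ≥0} (hf : LipschitzWith K f)
    (hinj : Function.Injective f) (hsurj : Function.Surjective f) {B : Set (ℝ × ℝ)}
    (hB : MeasurableSet B) (h : ∀ x ∉ B, f x = x) :
    ∫ x in B, |(fderiv ℝ f x).det| = (volume B).toReal := by
  rw [integral_eq_lintegral_of_nonneg_ae (Eventually.of_forall fun _ => abs_nonneg _)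
    (measurable_det_fderiv f).abs.aestronglyMeasurable, area_formula hf hinj hB,
    image_eq_of_id_off hinj hsurj h]

lemma fderiv_id_add_smul {f : ℝ × ℝ → ℝ × ℝ} {x : ℝ × ℝ} (hx : DifferentiableAt ℝ f x) (t : ℝ) :
    fderiv ℝ (fun x => x + t • f x) x = ContinuousLinearMap.id ℝ (ℝ × ℝ) + t • fderiv ℝ f x :=
  ((hasFDerivAt_id x).add (hx.hasFDerivAt.const_smul t)).fderiv

lemma id_add_bijective {f : ℝ × ℝ → ℝ × ℝ} {K : ℝ≥0} (hf : LipschitzWith K f) {t : ℝ}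
    (ht : 0 ≤ t) (htK : t * K ≤ 1 / 4) : Function.Bijective fun x => x + t • f x := by
  have hap : ApproximatesLinearOn (fun x => x + t • f x)
      ((ContinuousLinearEquiv.refl ℝ (ℝ × ℝ) : (ℝ × ℝ) ≃L[ℝ] (ℝ × ℝ)) : ℝ × ℝ →L[ℝ] ℝ × ℝ)
      univ (1 / 4) := by
    intro x _ y _
    have h1 : x + t • f x - (y + t • f y) - (x - y) = t • (f x - f y) := by
      rw [smul_sub]
      abel
    simp only [ContinuousLinearEquiv.coe_refl, ContinuousLinearMap.coe_id', id_eq]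
    rw [h1, norm_smul, Real.norm_of_nonneg ht]
    have h2 := mul_le_mul_of_nonneg_left (hf.norm_sub_le x y) ht
    have h3 := mul_le_mul_of_nonneg_right htK (norm_nonneg (x - y))
    push_cast
    linarith
  have hc : (1 / 4 : ℝ≥0) <
      ‖((ContinuousLinearEquiv.refl ℝ (ℝ × ℝ)).symm : ℝ × ℝ →L[ℝ] ℝ × ℝ)‖₊⁻¹ := by
    have : ‖((ContinuousLinearEquiv.refl ℝ (ℝ × ℝ)).symm : ℝ × ℝ →L[ℝ] ℝ × ℝ)‖₊ = 1 := by
      simp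
    rw [this, inv_one, ← NNReal.coe_lt_coe]
    push_cast
    norm_num
  exact ⟨injOn_univ.1 (hap.injOn (Or.inr hc)), hap.surjective (Or.inr hc)⟩

lemma lipschitz_id_add {f : ℝ × ℝ → ℝ × ℝ} {K : ℝ≥0} (hf : LipschitzWith K f) (t : ℝ) :
    LipschitzWith (1 + ‖t‖₊ * K) fun x => x + t • f x :=
  LipschitzWith.id.add ((lipschitzWith_smul t).comp hf)

/-- `∫ det (1 + t ∇f)` is a polynomial in `t`. -/
lemma integral_det_poly {f : ℝ × ℝ → ℝ × ℝ} {K : ℝ≥0} (hf : LipschitzWith K f)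
    {B : Set (ℝ × ℝ)} (hBv : volume B ≠ ⊤) (t : ℝ) :
    ∫ x in B, (ContinuousLinearMap.id ℝ (ℝ × ℝ) + t • fderiv ℝ f x).det =
      (volume B).toReal + t * (∫ x in B, (((fderiv ℝ f x) (1, 0)).1 + ((fderiv ℝ f x) (0, 1)).2))
        + t ^ 2 * ∫ x in B, (fderiv ℝ f x).det := by
  have : IsFiniteMeasure (volume.restrict B) := ⟨by simpa using hBv.lt_top⟩
  have hKb := norm_fderiv_le' hf
  have hm : ∀ v, Measurable fun x => fderiv ℝ f x v := fun v => measurable_fderiv_apply_const ℝ f v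
  have htr : Integrable (fun x => ((fderiv ℝ f x) (1, 0)).1 + ((fderiv ℝ f x) (0, 1)).2)
      (volume.restrict B) := by
    refine Integrable.of_bound (C := K + K)
      ((measurable_fst.comp (hm _)).add (measurable_snd.comp (hm _))).aestronglyMeasurable
      (Eventually.of_forall fun x => ?_)
    obtain ⟨h1, -, -, h4⟩ := abs_coord_le (fderiv ℝ f x)
    exact (norm_add_le _ _).trans (add_le_add (h1.trans (hKb x)) (h4.trans (hKb x)))
  have hdet : Integrable (fun x => (fderiv ℝ f x).det) (volume.restrict B) := by
    refine Integrable.of_bound (C := 2 * K * K) (measurable_det_fderiv f).aestronglyMeasurable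
      (Eventually.of_forall fun x => (abs_det_le _).trans ?_)
    have := hKb x
    have := norm_nonneg (fderiv ℝ f x)
    gcongr
  simp_rw [det_id_add_smul]
  have hone : Integrable (fun _ : ℝ × ℝ => (1 : ℝ)) (volume.restrict B) := integrable_const _
  have h12 : Integrable (fun x => 1 + t * (((fderiv ℝ f x) (1, 0)).1 +
      ((fderiv ℝ f x) (0, 1)).2)) (volume.restrict B) := hone.add (htr.const_mul t)
  rw [integral_add h12 (hdet.const_mul _), integral_add hone (htr.const_mul t),
    integral_const_mul, integral_const_mul]
  simp [Measure.real]

/-- The trace and the determinant of the derivative of a Lipschitz map vanishing off a set of finite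
measure have vanishing integral. For small `t` the map `x ↦ x + t f x` is a bijection with
positive Jacobian, so that `∫ det (1 + t ∇f)`, a polynomial in `t`, is constant near `0`, hence everywhere. -/
lemma integral_trace_add_det_eq_zero {f : ℝ × ℝ → ℝ × ℝ} {K : ℝ≥0} (hf : LipschitzWith K f)
    {B : Set (ℝ × ℝ)} (hB : MeasurableSet B) (hBv : volume B ≠ ⊤) (h0 : ∀ x ∉ B, f x = 0) :
    ∫ x in B, (((fderiv ℝ f x) (1, 0)).1 + ((fderiv ℝ f x) (0, 1)).2) = 0 ∧
      ∫ x in B, (fderiv ℝ f x).det = 0 := by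
  have hKb := norm_fderiv_le' hf
  set a := ∫ x in B, (((fderiv ℝ f x) (1, 0)).1 + ((fderiv ℝ f x) (0, 1)).2)
  set b := ∫ x in B, (fderiv ℝ f x).det
  have key : ∀ t : ℝ, 0 ≤ t → t * K ≤ 1 / 4 → t * a + t ^ 2 * b = 0 := by
    intro t ht htK
    have hbij := id_add_bijective hf ht htK
    have h1 := integral_abs_det (lipschitz_id_add hf t) hbij.1 hbij.2 hB
      (fun x hx => by simp [h0 x hx])
    have h2 : ∫ x in B, |(fderiv ℝ (fun x => x + t • f x) x).det| =
        ∫ x in B, (ContinuousLinearMap.id ℝ (ℝ × ℝ) + t • fderiv ℝ f x).det := by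
      refine integral_congr_ae (ae_restrict_of_ae ?_)
      filter_upwards [hf.ae_differentiableAt (μ := volume)] with x hx
      rw [fderiv_id_add_smul hx, abs_of_nonneg]
      rw [det_id_add_smul]
      obtain ⟨h1, -, -, h4⟩ := abs_coord_le (fderiv ℝ f x)
      have hd := abs_det_le (fderiv ℝ f x)
      have hn := norm_nonneg (fderiv ℝ f x)
      have hs : t * ‖fderiv ℝ f x‖ ≤ 1 / 4 :=
        (mul_le_mul_of_nonneg_left (hKb x) ht).trans htK
      have hs0 : 0 ≤ t * ‖fderiv ℝ f x‖ := by positivity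
      have j1 : -(t * ‖fderiv ℝ f x‖) ≤ t * ((fderiv ℝ f x) (1, 0)).1 := by
        have := mul_le_mul_of_nonneg_left (abs_le.1 h1).1 ht
        linarith
      have j2 : -(t * ‖fderiv ℝ f x‖) ≤ t * ((fderiv ℝ f x) (0, 1)).2 := by
        have := mul_le_mul_of_nonneg_left (abs_le.1 h4).1 ht
        linarith
      have j3 : -(2 * (t * ‖fderiv ℝ f x‖) ^ 2) ≤ t ^ 2 * (fderiv ℝ f x).det := by
        have := mul_le_mul_of_nonneg_left (abs_le.1 hd).1 (sq_nonneg t)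
        nlinarith
      nlinarith
    rw [h2, integral_det_poly hf hBv t] at h1
    change (volume B).toReal + t * a + t ^ 2 * b = (volume B).toReal at h1
    linarith
  have hK1 : (0 : ℝ) < K + 1 := by positivity
  have e1 := key (1 / (4 * (K + 1))) (by positivity) (by
    rw [div_mul_eq_mul_div, div_le_div_iff₀ (by positivity) (by norm_num)]
    linarith)
  have e2 := key (1 / (8 * (K + 1))) (by positivity) (by
    rw [div_mul_eq_mul_div, div_le_div_iff₀ (by positivity) (by norm_num)]
    linarith [K.2])
  field_simp at e1 e2
  have hb : b = 0 := by linarith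
  refine ⟨?_, hb⟩
  rw [hb] at e1
  rcases mul_eq_zero.1 (by linarith : a * (K + 1 : ℝ) = 0) with h | h
  · exact h
  · exact absurd h (ne_of_gt hK1)

/-- A Lipschitz bijection of the plane which is the identity off a set of finite measure preserves
the orientation: `∫ det ∇Φ = ∫ |det ∇Φ|`. -/
lemma det_nonneg_ae {Φ : ℝ × ℝ → ℝ × ℝ} {K : ℝ≥0} (hf : LipschitzWith K fun x => Φ x - x)
    (hinj : Function.Injective Φ) (hsurj : Function.Surjective Φ) {B : Set (ℝ × ℝ)}
    (hB : MeasurableSet B) (hBv : volume B ≠ ⊤) (h : ∀ x ∉ B, Φ x = x) :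
    ∀ᵐ x ∂(volume.restrict B), 0 ≤ (fderiv ℝ Φ x).det := by
  have : IsFiniteMeasure (volume.restrict B) := ⟨by simpa using hBv.lt_top⟩
  have hΦe : (fun x => x + (1 : ℝ) • (Φ x - x)) = Φ := by
    ext x <;> simp
  have hL := lipschitz_id_add hf 1
  rw [hΦe] at hL
  have h1 := integral_abs_det hL hinj hsurj hB h
  obtain ⟨ha, hb⟩ := integral_trace_add_det_eq_zero hf hB hBv (fun x hx => by simp [h x hx])
  have hintg : Integrable (fun x => (fderiv ℝ Φ x).det) (volume.restrict B) := by
    refine Integrable.of_bound (measurable_det_fderiv Φ).aestronglyMeasurable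
      (2 * (1 + ‖(1 : ℝ)‖₊ * K : ℝ≥0) * (1 + ‖(1 : ℝ)‖₊ * K : ℝ≥0))
      (Eventually.of_forall fun x => (abs_det_le _).trans ?_)
    have := norm_fderiv_le' hL x
    have := norm_nonneg (fderiv ℝ Φ x)
    gcongr
  have h2 : ∫ x in B, (fderiv ℝ Φ x).det = (volume B).toReal := by
    have h3 := integral_det_poly hf hBv 1
    rw [ha, hb] at h3
    simp only [mul_zero, add_zero] at h3
    rw [← h3]
    refine integral_congr_ae (ae_restrict_of_ae ?_)
    filter_upwards [hf.ae_differentiableAt (μ := volume)] with x hx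
    have := fderiv_id_add_smul hx 1
    rw [hΦe] at this
    rw [this]
  have h4 : ∫ x in B, (|(fderiv ℝ Φ x).det| - (fderiv ℝ Φ x).det) = 0 := by
    rw [integral_sub hintg.abs hintg, h1, h2, sub_self]
  rw [integral_eq_zero_iff_of_nonneg (fun x => sub_nonneg.2 (le_abs_self _))
    (hintg.abs.sub hintg)] at h4
  filter_upwards [h4] with x hx
  have : |(fderiv ℝ Φ x).det| - (fderiv ℝ Φ x).det = 0 := hx
  linarith [abs_nonneg (fderiv ℝ Φ x).det]

/-! ### Extension of a stretching map to the plane -/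

/-- A bi-Lipschitz homeomorphism `Φ` of the plane with inverse `Ψ`, equal to the identity off `Ω`,
where `Φ - id` is `A`-Lipschitz and `Ψ` is `L`-Lipschitz. -/
structure PlaneStretch (A L : ℝ≥0) (Ω : Set (ℝ × ℝ)) (Φ Ψ : ℝ × ℝ → ℝ × ℝ) : Prop where
  lip : LipschitzWith A fun x => Φ x - x
  lip_inv : LipschitzWith L Ψ
  left : ∀ x, Ψ (Φ x) = x
  right : ∀ x, Φ (Ψ x) = x
  id_off : ∀ x ∉ Ω, Φ x = x

/-- The five quantitative estimates in the definition of `GoodStretch`. -/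
def StretchEstimates (C : ℝ) (Ω : Set (ℝ × ℝ)) (τ : ℝ) (M : Set (ℝ × ℝ))
    (φ : ℝ × ℝ → ℝ × ℝ) : Prop :=
    (∀ p : ℝ≥0∞, 1 ≤ p →
      eLpNorm (fun x => φ x - x) p (volume.restrict Ω) +
        eLpNorm (fun x => fderiv ℝ φ x - ContinuousLinearMap.id ℝ (ℝ × ℝ)) p
          (volume.restrict Ω) ≤
        ENNReal.ofReal (C * (volume M).toReal ^ (1 / (2 * p.toReal)) * τ)) ∧
    (eLpNorm (fun x => φ x - x) ⊤ (volume.restrict Ω) ≤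
      ENNReal.ofReal (C * Real.sqrt (volume M).toReal * τ)) ∧
    (∀ᵐ x ∂(volume.restrict Ω), ‖fderiv ℝ φ x‖ ≤ C * (fderiv ℝ φ x).det) ∧
    (∀ᵐ x ∂(volume.restrict M), 1 + τ ≤ (fderiv ℝ φ x).det) ∧
    (∀ᵐ x ∂(volume.restrict Ω),
      1 - C * Real.sqrt (volume M).toReal * τ ≤ (fderiv ℝ φ x).det)

namespace PlaneStretch

variable {A L : ℝ≥0} {Ω : Set (ℝ × ℝ)} {Φ Ψ : ℝ × ℝ → ℝ × ℝ}

lemma injective (h : PlaneStretch A L Ω Φ Ψ) : Function.Injective Φ :=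
  Function.LeftInverse.injective h.left

lemma surjective (h : PlaneStretch A L Ω Φ Ψ) : Function.Surjective Φ :=
  Function.RightInverse.surjective h.right

lemma lipschitz (h : PlaneStretch A L Ω Φ Ψ) : LipschitzWith (A + 1) Φ := by
  have := h.lip.add LipschitzWith.id
  simpa using this

lemma inv_id_off (h : PlaneStretch A L Ω Φ Ψ) : ∀ x ∉ Ω, Ψ x = x := by
  intro x hx
  have := h.left x
  rwa [h.id_off x hx] at this

lemma image_eq (h : PlaneStretch A L Ω Φ Ψ) {B : Set (ℝ × ℝ)} (hB : Ω ⊆ B) : Φ '' B = B :=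
  image_eq_of_id_off h.injective h.surjective fun x hx => h.id_off x fun hx' => hx (hB hx')

lemma det_nonneg (h : PlaneStretch A L Ω Φ Ψ) (hΩ : IsOpen Ω) (hb : Bornology.IsBounded Ω) :
    ∀ᵐ x ∂(volume.restrict Ω), 0 ≤ (fderiv ℝ Φ x).det :=
  det_nonneg_ae h.lip h.injective h.surjective hΩ.measurableSet hb.measure_lt_top.ne h.id_off

lemma biLipschitzOn (h : PlaneStretch A L Ω Φ Ψ) : BiLipschitzOn Φ Ψ (closure Ω) := by
  refine ⟨⟨?_, h.injective.injOn, ?_⟩, ⟨fun x _ => h.left x, fun x _ => h.right x⟩,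
    ⟨_, h.lipschitz.lipschitzOnWith⟩, ⟨_, h.lip_inv.lipschitzOnWith⟩⟩
  · rw [mapsTo_iff_image_subset, h.image_eq subset_closure]
  · rw [SurjOn, h.image_eq subset_closure]

lemma goodStretch (h : PlaneStretch A L Ω Φ Ψ) (hΩ : IsOpen Ω) {C τ : ℝ} {M : Set (ℝ × ℝ)}
    (hE : StretchEstimates C Ω τ M Φ) : GoodStretch C Ω τ M :=
  ⟨Φ, Ψ, h.biLipschitzOn, fun x hx => h.id_off x fun hx' => by
    rw [hΩ.frontier_eq] at hx
    exact hx.2 hx', hE⟩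

end PlaneStretch

/-- Off `Ω`, where `Φ` is the identity, almost every derivative is the identity. -/
lemma fderiv_eq_id_ae {A : ℝ≥0} {Ω : Set (ℝ × ℝ)} {Φ : ℝ × ℝ → ℝ × ℝ}
    (hf : LipschitzWith A fun x => Φ x - x) (hΩ : MeasurableSet Ω) (h : ∀ x ∉ Ω, Φ x = x) :
    ∀ᵐ x, x ∉ Ω → HasFDerivAt Φ (ContinuousLinearMap.id ℝ (ℝ × ℝ)) x := by
  filter_upwards [hf.ae_differentiableAt (μ := volume),
    fderiv_eq_zero_ae_of_eq_zero hf hΩ.compl (fun x hx => by simp [h x hx])] with x hx h0 hxΩ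
  have h1 := hx.hasFDerivAt
  rw [h0 hxΩ] at h1
  have h2 := h1.add (hasFDerivAt_id x)
  have e : (fun y => (Φ y - y)) + id = Φ := by
    ext y <;> simp
  rw [e] at h2
  simpa using h2

/-- Under the distortion bound and positivity of the Jacobian, the Lipschitz constant of the inverse
is controlled by `C` alone: by Cramer's rule `‖(∇Φ)⁻¹‖ ≤ 2 ‖∇Φ‖ / det ∇Φ ≤ 2 C`. -/
lemma lipschitz_inverse {A K : ℝ≥0} {C : ℝ} {Ω : Set (ℝ × ℝ)} (hΩ : IsOpen Ω)
    {Φ Ψ : ℝ × ℝ → ℝ × ℝ}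
    (hf : LipschitzWith A fun x => Φ x - x) (hΨ : LipschitzWith K Ψ)
    (hr : ∀ x, Φ (Ψ x) = x)
    (hid : ∀ x ∉ Ω, Φ x = x)
    (hC : ∀ᵐ x ∂(volume.restrict Ω), ‖fderiv ℝ Φ x‖ ≤ C * (fderiv ℝ Φ x).det)
    (hpos : ∀ᵐ x ∂(volume.restrict Ω), 0 < (fderiv ℝ Φ x).det) :
    LipschitzWith (max (2 * C) 1).toNNReal Ψ := by
  have hΦ : LipschitzWith (A + 1) Φ := by
    have := hf.add LipschitzWith.id
    simpa using this
  have hgood : ∀ᵐ x, DifferentiableAt ℝ Φ x ∧ ∀ w, ‖w‖ ≤ max (2 * C) 1 * ‖fderiv ℝ Φ x w‖ := by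
    rw [ae_restrict_iff' hΩ.measurableSet] at hC hpos
    filter_upwards [hC, hpos, hΦ.ae_differentiableAt (μ := volume),
      fderiv_eq_id_ae hf hΩ.measurableSet hid] with x h1 h2 h3 h4
    refine ⟨h3, fun w => ?_⟩
    by_cases hx : x ∈ Ω
    · have hd := h2 hx
      have h5 := det_mul_norm_le (fderiv ℝ Φ x) w
      have h6 : 2 * ‖fderiv ℝ Φ x‖ * ‖fderiv ℝ Φ x w‖ ≤
          2 * (C * (fderiv ℝ Φ x).det) * ‖fderiv ℝ Φ x w‖ := by
        gcongr
        exact h1 hx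
      have h7 : ‖w‖ ≤ 2 * C * ‖fderiv ℝ Φ x w‖ := by
        refine le_of_mul_le_mul_left ?_ hd
        linarith
      exact h7.trans (mul_le_mul_of_nonneg_right (le_max_left _ _) (norm_nonneg _))
    · rw [(h4 hx).fderiv]
      simpa using mul_le_mul_of_nonneg_right (le_max_right (2 * C) 1) (norm_nonneg w)
  refine lipschitzWith_of_ae_fderiv_le hΨ ?_
  have hnull := volume_image_null hΦ (ae_iff.1 hgood)
  filter_upwards [hΨ.ae_differentiableAt (μ := volume), measure_eq_zero_iff_ae_notMem.1 hnull]
    with y hy hyn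
  have hg : DifferentiableAt ℝ Φ (Ψ y) ∧
      ∀ w, ‖w‖ ≤ max (2 * C) 1 * ‖fderiv ℝ Φ (Ψ y) w‖ := by
    by_contra hcon
    exact hyn ⟨Ψ y, hcon, hr y⟩
  have hcomp := hg.1.hasFDerivAt.comp y hy.hasFDerivAt
  have hid' : Φ ∘ Ψ = id := funext hr
  rw [hid'] at hcomp
  have huniq := hcomp.unique (hasFDerivAt_id y)
  rw [Real.coe_toNNReal _ (le_trans zero_le_one (le_max_right _ _))]
  refine ContinuousLinearMap.opNorm_le_bound _ (le_trans zero_le_one (le_max_right _ _)) fun v => ?_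
  have h8 := hg.2 (fderiv ℝ Ψ y v)
  have h9 : fderiv ℝ Φ (Ψ y) (fderiv ℝ Ψ y v) = v := by
    have := congrArg (fun T : ℝ × ℝ →L[ℝ] ℝ × ℝ => T v) huniq
    simpa using this
  rwa [h9] at h8

lemma StretchEstimates.congr {C τ : ℝ} {Ω M : Set (ℝ × ℝ)} (hΩ : IsOpen Ω) (hM : MeasurableSet M)
    (hMΩ : M ⊆ Ω)
    {φ Φ : ℝ × ℝ → ℝ × ℝ} (h : EqOn φ Φ Ω) (hE : StretchEstimates C Ω τ M φ) :
    StretchEstimates C Ω τ M Φ := by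
  have hd : ∀ x ∈ Ω, fderiv ℝ φ x = fderiv ℝ Φ x := fun x hx =>
    (h.eventuallyEq_of_mem (hΩ.mem_nhds hx)).fderiv_eq
  obtain ⟨h1, h2, h3, h4, h5⟩ := hE
  have hmem : ∀ᵐ x ∂(volume.restrict Ω), x ∈ Ω := ae_restrict_mem hΩ.measurableSet
  have c1 : (fun x => φ x - x) =ᵐ[volume.restrict Ω] fun x => Φ x - x := by
    filter_upwards [hmem] with x hx
    rw [h hx]
  have c2 : (fun x => fderiv ℝ φ x - ContinuousLinearMap.id ℝ (ℝ × ℝ)) =ᵐ[volume.restrict Ω]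
      fun x => fderiv ℝ Φ x - ContinuousLinearMap.id ℝ (ℝ × ℝ) := by
    filter_upwards [hmem] with x hx
    rw [hd x hx]
  refine ⟨fun p hp => ?_, ?_, ?_, ?_, ?_⟩
  · rw [← eLpNorm_congr_ae c1, ← eLpNorm_congr_ae c2]
    exact h1 p hp
  · rwa [← eLpNorm_congr_ae c1]
  · filter_upwards [hmem, h3] with x hx h
    rwa [← hd x hx]
  · filter_upwards [ae_restrict_mem hM, h4] with x hx h
    rwa [← hd x (hMΩ hx)]
  · filter_upwards [hmem, h5] with x hx h
    rwa [← hd x hx]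

/-- The case `p = ∞` of the Sobolev estimate, where the power of `|M|` is `|M| ^ 0 = 1`. -/
lemma StretchEstimates.ae_norm_le {C τ : ℝ} (hC : 0 < C) (hτ : 0 < τ) {Ω M : Set (ℝ × ℝ)}
    {φ : ℝ × ℝ → ℝ × ℝ} (hE : StretchEstimates C Ω τ M φ) :
    ∀ᵐ x ∂(volume.restrict Ω), ‖fderiv ℝ φ x - ContinuousLinearMap.id ℝ (ℝ × ℝ)‖ ≤ C * τ := by
  have h1 := hE.1 ⊤ le_top
  simp only [ENNReal.toReal_top, mul_zero, div_zero, Real.rpow_zero, mul_one] at h1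
  have h2 := le_trans le_add_self h1
  rw [eLpNorm_exponent_top] at h2
  filter_upwards [ae_le_eLpNormEssSup (f := fun x => fderiv ℝ φ x -
    ContinuousLinearMap.id ℝ (ℝ × ℝ)) (μ := volume.restrict Ω)] with x hx
  have h3 := hx.trans h2
  rw [← ofReal_norm] at h3
  exact (ENNReal.ofReal_le_ofReal_iff (by positivity)).1 h3

/-- Extending `φ - id` by zero turns a stretching map of `cl Ω` into a homeomorphism of the plane
with Lipschitz constants depending only on `C` and `τ`. -/
lemma GoodStretch.exists_planeStretch {C τ : ℝ} (hC : 0 < C) (hτ : 0 < τ) {Ω M : Set (ℝ × ℝ)}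
    (hΩ : IsOpen Ω) (hM : MeasurableSet M) (hMΩ : M ⊆ Ω)
    (hsmall : C * Real.sqrt (volume M).toReal * τ < 1) (h : GoodStretch C Ω τ M) :
    ∃ Φ Ψ, PlaneStretch (C * τ).toNNReal (max (2 * C) 1).toNNReal Ω Φ Ψ ∧
      StretchEstimates C Ω τ M Φ := by
  classical
  obtain ⟨φ, ψ, ⟨hbij, ⟨hl, hr⟩, ⟨K₁, hφ⟩, ⟨K₂, hψ⟩⟩, hfr, hE⟩ := h
  have hfrψ : ∀ x ∈ frontier Ω, ψ x = x := fun x hx => by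
    have := hl (frontier_subset_closure hx)
    rwa [hfr x hx] at this
  set Φ : ℝ × ℝ → ℝ × ℝ := fun x => x + (closure Ω).indicator (fun x => φ x - x) x with hΦdef
  set Ψ : ℝ × ℝ → ℝ × ℝ := fun x => x + (closure Ω).indicator (fun x => ψ x - x) x with hΨdef
  have hΦi : ∀ x ∈ closure Ω, Φ x = φ x := fun x hx => by simp [hΦdef, hx]
  have hΨi : ∀ x ∈ closure Ω, Ψ x = ψ x := fun x hx => by simp [hΨdef, hx]
  have hΦo : ∀ x ∉ closure Ω, Φ x = x := fun x hx => by simp [hΦdef, hx]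
  have hΨo : ∀ x ∉ closure Ω, Ψ x = x := fun x hx => by simp [hΨdef, hx]
  have hmψ : MapsTo ψ (closure Ω) (closure Ω) := by
    intro y hy
    obtain ⟨x, hx, rfl⟩ := hbij.surjOn hy
    rwa [hl hx]
  have hleft : ∀ x, Ψ (Φ x) = x := fun x => by
    by_cases hx : x ∈ closure Ω
    · rw [hΦi x hx, hΨi _ (hbij.mapsTo hx), hl hx]
    · rw [hΦo x hx, hΨo x hx]
  have hright : ∀ x, Φ (Ψ x) = x := fun x => by
    by_cases hx : x ∈ closure Ω
    · rw [hΨi x hx, hΦi _ (hmψ hx), hr hx]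
    · rw [hΨo x hx, hΦo x hx]
  have hid : ∀ x ∉ Ω, Φ x = x := fun x hx => by
    by_cases hxc : x ∈ closure Ω
    · rw [hΦi x hxc]
      exact hfr x (by rw [hΩ.frontier_eq]; exact ⟨hxc, hx⟩)
    · exact hΦo x hxc
  have hLΦ₀ : LipschitzWith (K₁ + 1) fun x => Φ x - x := by
    have := lipschitz_extension_by_zero (h := fun x => φ x - x)
      (hφ.sub LipschitzWith.id.lipschitzOnWith) (fun x hx => by simp [hfr x hx])
    simpa [hΦdef] using this
  have hLΨ₀ : LipschitzWith (K₂ + 1 + 1) Ψ := by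
    have := (lipschitz_extension_by_zero (h := fun x => ψ x - x)
      (hψ.sub LipschitzWith.id.lipschitzOnWith) (fun x hx => by simp [hfrψ x hx])).add
        LipschitzWith.id
    simpa [hΨdef, add_comm] using this
  have hEΦ : StretchEstimates C Ω τ M Φ :=
    StretchEstimates.congr hΩ hM hMΩ (fun x hx => (hΦi x (subset_closure hx)).symm) hE
  refine ⟨Φ, Ψ, ⟨?_, ?_, hleft, hright, hid⟩, hEΦ⟩
  · refine lipschitzWith_of_ae_fderiv_le hLΦ₀ ?_
    have h1 := hEΦ.ae_norm_le hC hτ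
    rw [ae_restrict_iff' hΩ.measurableSet] at h1
    rw [Real.coe_toNNReal _ (by positivity)]
    filter_upwards [h1, hLΦ₀.ae_differentiableAt (μ := volume),
      fderiv_eq_zero_ae_of_eq_zero hLΦ₀ hΩ.measurableSet.compl (fun x hx => by simp [hid x hx])]
      with x h2 h3 h4
    by_cases hx : x ∈ Ω
    · have h5 := h3.hasFDerivAt.add (hasFDerivAt_id x)
      have e : (fun y => (Φ y - y)) + id = Φ := by
        ext y <;> simp
      rw [e] at h5
      have h6 := h2 hx
      rw [h5.fderiv] at h6
      simpa using h6
    · rw [h4 hx, norm_zero]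
      positivity
  · refine lipschitz_inverse hΩ hLΦ₀ hLΨ₀ hright hid hEΦ.2.2.1 ?_
    filter_upwards [hEΦ.2.2.2.2] with x hx
    linarith

/-! ### Compactness -/

lemma exists_norm_bound {Ω : Set (ℝ × ℝ)} (hb : Bornology.IsBounded Ω) (K : ℝ≥0) :
    ∃ R : ℝ, ∀ f : ℝ × ℝ → ℝ × ℝ, LipschitzWith K f → (∀ x ∉ Ω, f x = 0) → ∀ x, ‖f x‖ ≤ R := by
  obtain ⟨r, hr0, hr⟩ := hb.exists_pos_norm_lt
  have hz : ((r, 0) : ℝ × ℝ) ∉ Ω := fun hmem => by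
    have := hr _ hmem
    simp [abs_of_pos hr0] at this
  refine ⟨K * (r + r), fun f hf h0 x => ?_⟩
  by_cases hx : x ∈ Ω
  · have h1 := hf.dist_le_mul x (r, 0)
    rw [h0 _ hz, dist_zero_right] at h1
    refine h1.trans (mul_le_mul_of_nonneg_left ?_ K.2)
    rw [dist_eq_norm]
    refine (norm_sub_le _ _).trans (add_le_add (hr x hx).le ?_)
    simp [abs_of_pos hr0, hr0.le]
  · rw [h0 x hx, norm_zero]
    positivity

lemma lipschitzWith_of_tendsto {K : ℝ≥0} {f : ℕ → ℝ × ℝ → ℝ × ℝ} {g : ℝ × ℝ → ℝ × ℝ}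
    (hf : ∀ n, LipschitzWith K (f n)) (h : ∀ x, Tendsto (fun n => f n x) atTop (𝓝 (g x))) :
    LipschitzWith K g :=
  LipschitzWith.of_dist_le_mul fun x y =>
    le_of_tendsto ((h x).dist (h y)) (Eventually.of_forall fun n => (hf n).dist_le_mul x y)

/-- Arzelà–Ascoli for equi-Lipschitz maps vanishing off a fixed bounded set. -/
lemma exists_uniform_subseq {K : ℝ≥0} {Ω : Set (ℝ × ℝ)} (hb : Bornology.IsBounded Ω)
    {f : ℕ → ℝ × ℝ → ℝ × ℝ} (hf : ∀ n, LipschitzWith K (f n)) (h0 : ∀ n, ∀ x ∉ Ω, f n x = 0) :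
    ∃ (g : ℝ × ℝ → ℝ × ℝ) (σ : ℕ → ℕ), StrictMono σ ∧
      TendstoUniformly (fun n => f (σ n)) g atTop := by
  classical
  obtain ⟨R, hR⟩ := exists_norm_bound hb K
  have : CompactSpace (closure Ω) := isCompact_iff_compactSpace.1 hb.isCompact_closure
  let F : ℕ → BoundedContinuousFunction (closure Ω) (ℝ × ℝ) := fun n =>
    BoundedContinuousFunction.mkOfCompact ⟨fun x => f n x, (hf n).continuous.comp
      continuous_subtype_val⟩
  have hc := BoundedContinuousFunction.arzela_ascoli (closedBall (0 : ℝ × ℝ) R)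
    (isCompact_closedBall _ _) (range F)
    (by
      rintro _ x ⟨n, rfl⟩
      simpa [F] using hR (f n) (hf n) (h0 n) x)
    (by
      refine (LipschitzWith.uniformEquicontinuous _ K ?_).equicontinuous
      rintro ⟨_, n, rfl⟩
      exact ((hf n).comp (LipschitzWith.subtype_val (closure Ω))).weaken (by simp))
  obtain ⟨G, -, σ, hσ, hG⟩ := hc.tendsto_subseq (fun n => subset_closure (mem_range_self n))
  refine ⟨fun x => if h : x ∈ closure Ω then G ⟨x, h⟩ else 0, σ, hσ, ?_⟩
  rw [Metric.tendstoUniformly_iff]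
  intro ε hε
  filter_upwards [(Metric.tendsto_nhds.1 hG) ε hε] with n hn x
  by_cases hx : x ∈ closure Ω
  · simp only [hx, dite_true]
    rw [dist_comm]
    exact (BoundedContinuousFunction.dist_coe_le_dist (f := F (σ n)) (g := G) ⟨x, hx⟩).trans_lt hn
  · simpa [hx, h0 (σ n) x (fun h => hx (subset_closure h))] using hε

/-- Plane stretches with fixed constants are sequentially compact for uniform convergence. -/
lemma PlaneStretch.exists_subseq {A L : ℝ≥0} {Ω : Set (ℝ × ℝ)} (hb : Bornology.IsBounded Ω)
    {Φ Ψ : ℕ → ℝ × ℝ → ℝ × ℝ} (h : ∀ n, PlaneStretch A L Ω (Φ n) (Ψ n)) :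
    ∃ (Φ' Ψ' : ℝ × ℝ → ℝ × ℝ) (σ : ℕ → ℕ), StrictMono σ ∧ PlaneStretch A L Ω Φ' Ψ' ∧
      TendstoUniformly (fun n => Φ (σ n)) Φ' atTop ∧ ∀ x, Tendsto (fun n => Ψ (σ n) x) atTop
        (𝓝 (Ψ' x)) := by
  obtain ⟨f, σ₁, hσ₁, hf⟩ := exists_uniform_subseq hb (f := fun n x => Φ n x - x)
    (fun n => (h n).lip) (fun n x hx => by simp [(h n).id_off x hx])
  obtain ⟨g, σ₂, hσ₂, hg⟩ := exists_uniform_subseq hb (f := fun n x => Ψ (σ₁ n) x - x)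
    (fun n => (h (σ₁ n)).lip_inv.sub LipschitzWith.id)
    (fun n x hx => by simp [(h (σ₁ n)).inv_id_off x hx])
  have hΦ : TendstoUniformly (fun n => Φ (σ₁ (σ₂ n))) (fun x => f x + x) atTop := by
    rw [Metric.tendstoUniformly_iff] at hf ⊢
    intro ε hε
    filter_upwards [hσ₂.tendsto_atTop.eventually (hf ε hε)] with n hn x
    have := hn x
    rw [dist_eq_norm] at this ⊢
    convert this using 2
    abel
  have hΨ : ∀ x, Tendsto (fun n => Ψ (σ₁ (σ₂ n)) x) atTop (𝓝 (g x + x)) := fun x => by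
    simpa using (hg.tendsto_at x).add_const x
  have hleft : ∀ x, g (f x + x) + (f x + x) = x := fun x => by
    have h1 := hΨ (f x + x)
    have h2 : Tendsto (fun n => Ψ (σ₁ (σ₂ n)) (f x + x) - Ψ (σ₁ (σ₂ n)) (Φ (σ₁ (σ₂ n)) x))
        atTop (𝓝 0) := by
      have h3 : Tendsto (fun n => L * dist (f x + x) (Φ (σ₁ (σ₂ n)) x)) atTop (𝓝 0) := by
        have := ((tendsto_const_nhds (x := f x + x)).dist (hΦ.tendsto_at x)).const_mul (L : ℝ)
        simpa using this
      refine squeeze_zero_norm (fun n => ?_) h3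
      rw [← dist_eq_norm]
      exact (h _).lip_inv.dist_le_mul _ _
    have h4 : ∀ n, Ψ (σ₁ (σ₂ n)) (Φ (σ₁ (σ₂ n)) x) = x := fun n => (h _).left x
    simp only [h4] at h2
    have h5 := h1.sub_const x
    exact sub_eq_zero.1 (tendsto_nhds_unique h5 h2)
  have hright : ∀ x, f (g x + x) + (g x + x) = x := fun x => by
    have h1 := hΦ.tendsto_at (g x + x)
    have h2 : Tendsto (fun n => Φ (σ₁ (σ₂ n)) (g x + x) - Φ (σ₁ (σ₂ n)) (Ψ (σ₁ (σ₂ n)) x))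
        atTop (𝓝 0) := by
      have h3 : Tendsto (fun n => (A + 1 : ℝ≥0) * dist (g x + x) (Ψ (σ₁ (σ₂ n)) x)) atTop
          (𝓝 0) := by
        have := ((tendsto_const_nhds (x := g x + x)).dist (hΨ x)).const_mul ((A + 1 : ℝ≥0) : ℝ)
        simpa using this
      refine squeeze_zero_norm (fun n => ?_) h3
      rw [← dist_eq_norm]
      exact (h _).lipschitz.dist_le_mul _ _
    have h4 : ∀ n, Φ (σ₁ (σ₂ n)) (Ψ (σ₁ (σ₂ n)) x) = x := fun n => (h _).right x
    simp only [h4] at h2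
    have h5 := h1.sub_const x
    exact sub_eq_zero.1 (tendsto_nhds_unique h5 h2)
  refine ⟨fun x => f x + x, fun x => g x + x, σ₁ ∘ σ₂, hσ₁.comp hσ₂, ⟨?_, ?_, hleft, hright, ?_⟩,
    hΦ, hΨ⟩
  · simpa using lipschitzWith_of_tendsto (fun n => (h (σ₁ n)).lip) hf.tendsto_at
  · exact lipschitzWith_of_tendsto (fun n => (h (σ₁ (σ₂ n))).lip_inv) hΨ
  · intro x hx
    refine tendsto_nhds_unique (hΦ.tendsto_at x) ?_
    simp [(h _).id_off x hx]

/-! ### Passage to the limit in the estimates -/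

/-- Lower bounds for Jacobians survive uniform limits of injective Lipschitz maps: the images
`Φₙ(Q)` of a compact set lie in small neighbourhoods of `Φ(Q)`, so their areas are
asymptotically at most `|Φ(Q)| = ∫_Q |det ∇Φ|`. -/
lemma det_ge_of_tendstoUniformly {K : ℝ≥0} {Φn : ℕ → ℝ × ℝ → ℝ × ℝ} {Φ : ℝ × ℝ → ℝ × ℝ}
    (hL : ∀ n, LipschitzWith K (Φn n)) (hinj : ∀ n, Function.Injective (Φn n))
    (hLΦ : LipschitzWith K Φ) (hinjΦ : Function.Injective Φ)
    (hu : TendstoUniformly Φn Φ atTop) {S : Set (ℝ × ℝ)} (hS : MeasurableSet S) {a : ℝ}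
    (ha : ∀ᶠ n in atTop, ∀ᵐ x ∂(volume.restrict S), a ≤ (fderiv ℝ (Φn n) x).det)
    (hpos : ∀ᵐ x ∂(volume.restrict S), 0 ≤ (fderiv ℝ Φ x).det) :
    ∀ᵐ x ∂(volume.restrict S), a ≤ (fderiv ℝ Φ x).det := by
  have key : ∀ Q ⊆ S, IsCompact Q → ENNReal.ofReal a * volume Q ≤ volume (Φ '' Q) := by
    intro Q hQS hQ
    have hcpt : IsCompact (Φ '' Q) := hQ.image hLΦ.continuous
    have hlim : Tendsto (fun r => volume (cthickening r (Φ '' Q))) (𝓝[>] 0)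
        (𝓝 (volume (Φ '' Q))) :=
      (tendsto_measure_cthickening_of_isCompact hcpt).mono_left nhdsWithin_le_nhds
    refine ge_of_tendsto hlim ?_
    filter_upwards [self_mem_nhdsWithin] with ε hε
    obtain ⟨n, hn, hun⟩ := (ha.and ((Metric.tendstoUniformly_iff.1 hu) ε hε)).exists
    have hn' := ae_restrict_of_ae_restrict_of_subset hQS hn
    calc ENNReal.ofReal a * volume Q = ∫⁻ _ in Q, ENNReal.ofReal a := by simp
      _ ≤ ∫⁻ x in Q, ENNReal.ofReal |(fderiv ℝ (Φn n) x).det| := by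
        refine lintegral_mono_ae ?_
        filter_upwards [hn'] with x hx
        exact ENNReal.ofReal_le_ofReal (hx.trans (le_abs_self _))
      _ = volume (Φn n '' Q) := area_formula (hL n) (hinj n) hQ.measurableSet
      _ ≤ volume (cthickening ε (Φ '' Q)) := by
        refine measure_mono ?_
        rintro _ ⟨x, hx, rfl⟩
        refine mem_cthickening_of_dist_le _ (Φ x) _ _ (mem_image_of_mem Φ hx) ?_
        rw [dist_comm]
        exact (hun x).le
  have hmeas : MeasurableSet (S ∩ {x | (fderiv ℝ Φ x).det < a}) :=
    hS.inter (measurableSet_lt (measurable_det_fderiv Φ) measurable_const)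
  have hnull : volume (S ∩ {x | (fderiv ℝ Φ x).det < a}) = 0 := by
    by_contra hne
    obtain ⟨Q, hQT, hQ, hQpos⟩ := hmeas.exists_lt_isCompact (pos_iff_ne_zero.2 hne)
    have hQS : Q ⊆ S := fun x hx => (hQT hx).1
    have h1 := key Q hQS hQ
    rw [← area_formula hLΦ hinjΦ hQ.measurableSet] at h1
    have hpos' := ae_restrict_of_ae_restrict_of_subset hQS hpos
    have hmem : ∀ᵐ x ∂(volume.restrict Q), x ∈ Q := ae_restrict_mem hQ.measurableSet
    have h2 : ∫⁻ x in Q, ENNReal.ofReal |(fderiv ℝ Φ x).det| < ∫⁻ _ in Q, ENNReal.ofReal a := by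
      have hle : ∀ᵐ x ∂(volume.restrict Q),
          ENNReal.ofReal |(fderiv ℝ Φ x).det| < ENNReal.ofReal a := by
        filter_upwards [hpos', hmem] with x h0 hx
        have hlt : (fderiv ℝ Φ x).det < a := (hQT hx).2
        rw [abs_of_nonneg h0]
        exact (ENNReal.ofReal_lt_ofReal_iff (h0.trans_lt hlt)).2 hlt
      refine lintegral_strict_mono ?_ (by fun_prop) ?_ hle
      · intro h0
        rw [Measure.restrict_eq_zero] at h0
        exact hQpos.ne' h0
      · refine ne_top_of_le_ne_top ?_ (lintegral_mono_ae (hle.mono fun x hx => hx.le))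
        simpa using ENNReal.mul_ne_top ENNReal.ofReal_ne_top hQ.measure_lt_top.ne
    rw [setLIntegral_const] at h2
    exact absurd h1 (not_le.2 h2)
  rw [ae_restrict_iff' hS]
  filter_upwards [measure_eq_zero_iff_ae_notMem.1 hnull] with x hx hxS
  by_contra hcon
  exact hx ⟨hxS, not_le.1 hcon⟩

namespace PlaneStretch

variable {A L : ℝ≥0} {Ω : Set (ℝ × ℝ)} {Φ Ψ : ℝ × ℝ → ℝ × ℝ}

lemma det_nonneg_univ (h : PlaneStretch A L Ω Φ Ψ) (hΩ : IsOpen Ω)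
    (hb : Bornology.IsBounded Ω) : ∀ᵐ x, 0 ≤ (fderiv ℝ Φ x).det := by
  have h1 := h.det_nonneg hΩ hb
  rw [ae_restrict_iff' hΩ.measurableSet] at h1
  filter_upwards [h1, fderiv_eq_id_ae h.lip hΩ.measurableSet h.id_off] with x h2 h3
  by_cases hx : x ∈ Ω
  · exact h2 hx
  · rw [(h3 hx).fderiv, det_formula]
    simp

/-- Change of variables `z = Φ y`. -/
lemma integral_comp_inv (h : PlaneStretch A L Ω Φ Ψ) (g : ℝ × ℝ → ℝ) :
    ∫ z, g (Ψ z) = ∫ y, |(fderiv ℝ Φ y).det| • g y := by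
  set D : Set (ℝ × ℝ) := {x | DifferentiableAt ℝ Φ x} with hD
  have hDm : MeasurableSet D := measurableSet_of_differentiableAt ℝ Φ
  have hDc : volume Dᶜ = 0 := ae_iff.1 (h.lipschitz.ae_differentiableAt (μ := volume))
  have hDc' : volume (Φ '' D)ᶜ = 0 := by
    rw [← image_compl_eq ⟨h.injective, h.surjective⟩]
    exact volume_image_null h.lipschitz hDc
  have h1 := integral_image_eq_integral_abs_det_fderiv_smul volume hDm
    (f := Φ) (f' := fun x => fderiv ℝ Φ x)
    (fun x hx => (hx : DifferentiableAt ℝ Φ x).hasFDerivAt.hasFDerivWithinAt)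
    h.injective.injOn (fun z => g (Ψ z))
  rw [setIntegral_congr_set (ae_eq_univ.2 hDc'), setIntegral_congr_set (ae_eq_univ.2 hDc)] at h1
  simpa [h.left] using h1

lemma mollify_det (h : PlaneStretch A L Ω Φ Ψ) (hΩ : IsOpen Ω) (hb : Bornology.IsBounded Ω)
    (ρ : ContDiffBump (0 : ℝ × ℝ)) (x : ℝ × ℝ) :
    mollify ρ (fun y => (fderiv ℝ Φ y).det) x = ∫ z, ρ.normed volume (x - Ψ z) := by
  rw [mollify_eq', h.integral_comp_inv (fun y => ρ.normed volume (x - y))]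
  refine integral_congr_ae ?_
  filter_upwards [h.det_nonneg_univ hΩ hb] with y hy
  rw [abs_of_nonneg hy, smul_eq_mul, smul_eq_mul, mul_comm]

lemma norm_det_le (h : PlaneStretch A L Ω Φ Ψ) (x : ℝ × ℝ) :
    ‖(fderiv ℝ Φ x).det‖ ≤ 2 * (A + 1 : ℝ≥0) * (A + 1 : ℝ≥0) := by
  refine (abs_det_le _).trans ?_
  have := norm_fderiv_le' h.lipschitz x
  have := norm_nonneg (fderiv ℝ Φ x)
  gcongr

lemma locallyIntegrable_det (h : PlaneStretch A L Ω Φ Ψ) :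
    LocallyIntegrable (fun x => (fderiv ℝ Φ x).det) volume := by
  have : MemLp (fun x => (fderiv ℝ Φ x).det) ⊤ volume :=
    memLp_top_of_bound (measurable_det_fderiv Φ).aestronglyMeasurable _
      (Eventually.of_forall h.norm_det_le)
  exact this.locallyIntegrable le_top

lemma fderiv_ae (h : PlaneStretch A L Ω Φ Ψ) : ∀ᵐ x, fderiv ℝ Φ x =
    fderiv ℝ (fun x => Φ x - x) x + ContinuousLinearMap.id ℝ (ℝ × ℝ) := by
  filter_upwards [h.lip.ae_differentiableAt (μ := volume)] with x hx
  have h5 := hx.hasFDerivAt.add (hasFDerivAt_id x)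
  have e : (fun y => (Φ y - y)) + id = Φ := by
    ext y <;> simp
  rw [e] at h5
  exact h5.fderiv

lemma mollify_fderiv (h : PlaneStretch A L Ω Φ Ψ) (ρ : ContDiffBump (0 : ℝ × ℝ)) (x : ℝ × ℝ) :
    mollify ρ (fderiv ℝ Φ) x =
      mollify ρ (fderiv ℝ fun x => Φ x - x) x + ContinuousLinearMap.id ℝ (ℝ × ℝ) := by
  have hi : Integrable (fun y => fderiv ℝ (fun x => Φ x - x) (x - y)) (bumpMeasure ρ) :=
    Integrable.of_bound ((stronglyMeasurable_fderiv' _).comp_measurable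
      (measurable_const.sub measurable_id)).aestronglyMeasurable A
      (Eventually.of_forall fun y => norm_fderiv_le' h.lip _)
  unfold mollify
  rw [integral_congr_ae (ae_bumpMeasure_sub h.fderiv_ae x),
    integral_add hi (integrable_const _)]
  simp

end PlaneStretch

/-- A uniformly convergent sequence of plane stretches with common constants, together with the
limits of the maps and of their inverses. -/
structure StretchLimit (A L : ℝ≥0) (Ω : Set (ℝ × ℝ)) (Φn Ψn : ℕ → ℝ × ℝ → ℝ × ℝ)
    (Φ Ψ : ℝ × ℝ → ℝ × ℝ) : Prop where
  isOpen : IsOpen Ω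
  bounded : Bornology.IsBounded Ω
  seq : ∀ n, PlaneStretch A L Ω (Φn n) (Ψn n)
  lim : PlaneStretch A L Ω Φ Ψ
  unif : TendstoUniformly Φn Φ atTop
  inv : ∀ x, Tendsto (fun n => Ψn n x) atTop (𝓝 (Ψ x))

namespace StretchLimit

variable {A L : ℝ≥0} {Ω : Set (ℝ × ℝ)} {Φn Ψn : ℕ → ℝ × ℝ → ℝ × ℝ} {Φ Ψ : ℝ × ℝ → ℝ × ℝ}

lemma tendsto_sub_id (h : StretchLimit A L Ω Φn Ψn Φ Ψ) (x : ℝ × ℝ) :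
    Tendsto (fun n => Φn n x - x) atTop (𝓝 (Φ x - x)) :=
  (h.unif.tendsto_at x).sub_const x

lemma mollify_fderiv_sub_tendsto (h : StretchLimit A L Ω Φn Ψn Φ Ψ)
    (ρ : ContDiffBump (0 : ℝ × ℝ)) (x : ℝ × ℝ) :
    Tendsto (fun n => mollify ρ (fderiv ℝ fun x => Φn n x - x) x) atTop
      (𝓝 (mollify ρ (fderiv ℝ fun x => Φ x - x) x)) := by
  obtain ⟨R, hR⟩ := exists_norm_bound h.bounded A
  exact mollify_fderiv_tendsto (fun n => (h.seq n).lip) h.lim.lip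
    (fun n => hR _ (h.seq n).lip fun x hx => by simp [(h.seq n).id_off x hx]) h.tendsto_sub_id ρ x

/-- The Jacobians converge weakly, because `∫ ρ(x - y) det ∇Φₙ(y) dy = ∫ ρ(x - Ψₙ z) dz`. -/
lemma mollify_det_tendsto (h : StretchLimit A L Ω Φn Ψn Φ Ψ)
    (ρ : ContDiffBump (0 : ℝ × ℝ)) (x : ℝ × ℝ) :
    Tendsto (fun n => mollify ρ (fun y => (fderiv ℝ (Φn n) y).det) x) atTop
      (𝓝 (mollify ρ (fun y => (fderiv ℝ Φ y).det) x)) := by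
  simp only [(h.seq _).mollify_det h.isOpen h.bounded, h.lim.mollify_det h.isOpen h.bounded]
  obtain ⟨B, hB⟩ := (ρ.hasCompactSupport_normed (μ := volume)).exists_bound_of_continuous
    ρ.continuous_normed
  set T : Set (ℝ × ℝ) := Ω ∪ closedBall x ρ.rOut with hT
  have hTm : MeasurableSet T := h.isOpen.measurableSet.union isClosed_closedBall.measurableSet
  have hTv : volume T ≠ ⊤ := (h.bounded.union isBounded_closedBall).measure_lt_top.ne
  refine tendsto_integral_of_dominated_convergence (T.indicator fun _ => B) (fun n => ?_) ?_ ?_ ?_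
  · exact (ρ.continuous_normed.comp (continuous_const.sub
      (h.seq n).lip_inv.continuous)).aestronglyMeasurable
  · exact (integrable_indicator_iff hTm).2 (integrableOn_const hTv)
  · refine fun n => Eventually.of_forall fun z => ?_
    by_cases hz : z ∈ T
    · rw [indicator_of_mem hz]
      exact hB _
    · rw [indicator_of_notMem hz, (h.seq n).inv_id_off z fun hz' => hz (Or.inl hz')]
      have : x - z ∉ Function.support (ρ.normed volume) := by
        rw [ρ.support_normed_eq]
        intro hmem
        refine hz (Or.inr ?_)
        rw [mem_ball_zero_iff] at hmem
        rw [mem_closedBall, dist_comm, dist_eq_norm]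
        exact hmem.le
      rw [Function.notMem_support.1 this, norm_zero]
  · refine Eventually.of_forall fun z => ?_
    exact (ρ.continuous_normed.tendsto _).comp (tendsto_const_nhds.sub (h.inv z))

lemma distortion (h : StretchLimit A L Ω Φn Ψn Φ Ψ) {C : ℝ}
    (hC : ∀ n, ∀ᵐ x ∂(volume.restrict Ω), ‖fderiv ℝ (Φn n) x‖ ≤ C * (fderiv ℝ (Φn n) x).det) :
    ∀ᵐ x ∂(volume.restrict Ω), ‖fderiv ℝ Φ x‖ ≤ C * (fderiv ℝ Φ x).det := by
  have hstep : ∀ (ρ : ContDiffBump (0 : ℝ × ℝ)) (x : ℝ × ℝ), ball x ρ.rOut ⊆ Ω →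
      ‖mollify ρ (fderiv ℝ Φ) x‖ ≤ C * mollify ρ (fun y => (fderiv ℝ Φ y).det) x := by
    intro ρ x hball
    have hn : ∀ n, ‖mollify ρ (fderiv ℝ (Φn n)) x‖ ≤
        C * mollify ρ (fun y => (fderiv ℝ (Φn n) y).det) x := by
      intro n
      have hCn := hC n
      rw [ae_restrict_iff' h.isOpen.measurableSet] at hCn
      unfold mollify
      rw [← integral_const_mul]
      refine norm_integral_le_of_norm_le ?_ ?_
      · refine Integrable.const_mul ?_ C
        exact Integrable.of_bound ((measurable_det_fderiv (Φn n)).comp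
          (measurable_const.sub measurable_id)).aestronglyMeasurable _
          (Eventually.of_forall fun y => (h.seq n).norm_det_le _)
      · filter_upwards [ae_bumpMeasure_sub hCn x, ae_bumpMeasure_norm_le ρ] with y hy1 hy2
        refine hy1 (hball ?_)
        simpa [mem_ball, dist_eq_norm] using hy2
    refine le_of_tendsto_of_tendsto' (f := fun n => ‖mollify ρ (fderiv ℝ (Φn n)) x‖) ?_
      ((h.mollify_det_tendsto ρ x).const_mul C) hn
    simp only [(h.seq _).mollify_fderiv, h.lim.mollify_fderiv]
    exact ((h.mollify_fderiv_sub_tendsto ρ x).add_const _).norm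
  rw [ae_restrict_iff' h.isOpen.measurableSet]
  filter_upwards [mollify_tendsto_ae (locallyIntegrable_fderiv h.lim.lipschitz),
    mollify_tendsto_ae h.lim.locallyIntegrable_det] with x h1 h2 hx
  refine le_of_tendsto_of_tendsto h1.norm (h2.const_mul C) ?_
  obtain ⟨r, hr, hball⟩ := Metric.isOpen_iff.1 h.isOpen x hx
  filter_upwards [tendsto_bumpSeq.eventually (gt_mem_nhds hr)] with i hi
  exact hstep _ x ((ball_subset_ball hi.le).trans hball)

lemma eLpNorm_sub_le (h : StretchLimit A L Ω Φn Ψn Φ Ψ) (p : ℝ≥0∞) :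
    eLpNorm (fun x => Φ x - x) p (volume.restrict Ω) ≤
      liminf (fun n => eLpNorm (fun x => Φn n x - x) p (volume.restrict Ω)) atTop :=
  Lp.eLpNorm_lim_le_liminf_eLpNorm
    (fun n => (h.seq n).lip.continuous.aestronglyMeasurable) _
    (Eventually.of_forall h.tendsto_sub_id)

lemma eLpNorm_fderiv_le (h : StretchLimit A L Ω Φn Ψn Φ Ψ) {p : ℝ≥0∞} (hp : 1 ≤ p) :
    eLpNorm (fun x => fderiv ℝ Φ x - ContinuousLinearMap.id ℝ (ℝ × ℝ)) p (volume.restrict Ω) ≤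
      liminf (fun n => eLpNorm (fun x => fderiv ℝ (Φn n) x -
        ContinuousLinearMap.id ℝ (ℝ × ℝ)) p (volume.restrict Ω)) atTop := by
  have he : ∀ {Φ Ψ : ℝ × ℝ → ℝ × ℝ}, PlaneStretch A L Ω Φ Ψ →
      eLpNorm (fun x => fderiv ℝ Φ x - ContinuousLinearMap.id ℝ (ℝ × ℝ)) p (volume.restrict Ω) =
        eLpNorm (fderiv ℝ fun x => Φ x - x) p volume := by
    intro Φ Ψ hS
    refine (eLpNorm_indicator_eq_eLpNorm_restrict
      (f := fun x => fderiv ℝ Φ x - ContinuousLinearMap.id ℝ (ℝ × ℝ))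
      h.isOpen.measurableSet).symm.trans (eLpNorm_congr_ae ?_)
    filter_upwards [hS.fderiv_ae, fderiv_eq_zero_ae_of_eq_zero hS.lip h.isOpen.measurableSet.compl
      (fun x hx => by simp [hS.id_off x hx])] with x h1 h2
    by_cases hx : x ∈ Ω
    · rw [indicator_of_mem hx, h1, add_sub_cancel_right]
    · rw [indicator_of_notMem hx, h2 hx]
  simp only [he (h.seq _), he h.lim]
  exact eLpNorm_le_liminf_of_mollify (fun n => stronglyMeasurable_fderiv' _)
    (stronglyMeasurable_fderiv' _) (locallyIntegrable_fderiv h.lim.lip)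
    h.mollify_fderiv_sub_tendsto hp

end StretchLimit

lemma liminf_add_liminf_le {a b : ℕ → ℝ≥0∞} {B : ℝ≥0∞} (h : ∀ n, a n + b n ≤ B) :
    liminf a atTop + liminf b atTop ≤ B := by
  rw [liminf_eq_iSup_iInf_of_nat, liminf_eq_iSup_iInf_of_nat]
  refine ENNReal.iSup_add_iSup_le fun i j => (add_le_add ?_ ?_).trans (h (max i j))
  · exact iInf₂_le _ (le_max_left i j)
  · exact iInf₂_le _ (le_max_right i j)

/-! ### Exhaustion by compact sets and conclusion -/

lemma exists_compact_exhaustion {M : Set (ℝ × ℝ)} (hM : MeasurableSet M) (hMv : volume M ≠ ⊤) :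
    ∃ K : ℕ → Set (ℝ × ℝ), (∀ n, IsCompact (K n)) ∧ (∀ n, K n ⊆ M) ∧ Monotone K ∧
      ∀ᵐ x, x ∈ M → ∃ n, x ∈ K n := by
  have h : ∀ n : ℕ, ∃ K ⊆ M, IsCompact K ∧ volume (M \ K) < ((n : ℝ≥0∞) + 1)⁻¹ := fun n =>
    hM.exists_isCompact_sdiff_lt hMv (by simp)
  choose K hKM hKc hKv using h
  refine ⟨accumulate K, fun n => ?_, fun n => ?_, monotone_accumulate, ?_⟩
  · exact (finite_Iic n).isCompact_biUnion fun i _ => hKc i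
  · exact iUnion₂_subset fun i _ => hKM i
  · have hnull : volume (M \ ⋃ n, K n) = 0 := by
      refine le_antisymm (ge_of_tendsto' (ENNReal.tendsto_inv_nat_nhds_zero.comp
        (tendsto_add_atTop_nat 1)) fun n => ?_) zero_le
      refine (measure_mono (sdiff_subset_sdiff_right (subset_iUnion K n))).trans ?_
      simpa using (hKv n).le
    filter_upwards [measure_eq_zero_iff_ae_notMem.1 hnull] with x hx hxM
    by_contra hcon
    refine hx ⟨hxM, fun hmem => hcon ?_⟩
    obtain ⟨n, hn⟩ := mem_iUnion.1 hmem
    exact ⟨n, subset_accumulate hn⟩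

/-- **From compact sets to measurable sets.**  If the bi-Lipschitz stretching theorem with
constants `C, c` holds for all compact subsets of `Ω`, then (for a possibly smaller smallness
threshold `c' ≤ c`) it holds for all measurable subsets of `Ω`, with the same constant `C`. -/
theorem stretching_measurable_of_stretching_compact
    (Ω : Set (ℝ × ℝ)) (hΩ : IsC11Domain Ω) (C c : ℝ) (hC : 0 < C) (hc : 0 < c)
    (H : ∀ τ : ℝ, 0 < τ → ∀ K : Set (ℝ × ℝ), IsCompact K → K ⊆ Ω →
      (volume K).toReal ≤ c → Real.sqrt (volume K).toReal * τ ≤ c → GoodStretch C Ω τ K) :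
    ∃ c' : ℝ, 0 < c' ∧ c' ≤ c ∧
      ∀ τ : ℝ, 0 < τ → ∀ M : Set (ℝ × ℝ), MeasurableSet M → M ⊆ Ω →
        (volume M).toReal ≤ c' → Real.sqrt (volume M).toReal * τ ≤ c' →
        GoodStretch C Ω τ M := by
  obtain ⟨hO, -, hb, -⟩ := hΩ
  refine ⟨min c (1 / (2 * C)), by positivity, min_le_left _ _, fun τ hτ M hM hMΩ h1 h2 => ?_⟩
  have hMv : volume M ≠ ⊤ := (hb.subset hMΩ).measure_lt_top.ne
  have hsmall : C * Real.sqrt (volume M).toReal * τ < 1 := by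
    have h3 : Real.sqrt (volume M).toReal * τ ≤ 1 / (2 * C) := h2.trans (min_le_right _ _)
    rw [le_div_iff₀ (by positivity)] at h3
    linarith
  obtain ⟨Kn, hKc, hKM, hKmono, hKae⟩ := exists_compact_exhaustion hM hMv
  have hle : ∀ n, (volume (Kn n)).toReal ≤ (volume M).toReal := fun n =>
    ENNReal.toReal_mono hMv (measure_mono (hKM n))
  have hsle : ∀ n, Real.sqrt (volume (Kn n)).toReal ≤ Real.sqrt (volume M).toReal := fun n =>
    Real.sqrt_le_sqrt (hle n)
  have hex : ∀ n, ∃ Φ Ψ, PlaneStretch (C * τ).toNNReal (max (2 * C) 1).toNNReal Ω Φ Ψ ∧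
      StretchEstimates C Ω τ (Kn n) Φ := fun n => by
    refine GoodStretch.exists_planeStretch hC hτ hO (hKc n).measurableSet ((hKM n).trans hMΩ)
      (lt_of_le_of_lt ?_ hsmall) (H τ hτ (Kn n) (hKc n) ((hKM n).trans hMΩ)
        ((hle n).trans (h1.trans (min_le_left _ _)))
        ((mul_le_mul_of_nonneg_right (hsle n) hτ.le).trans (h2.trans (min_le_left _ _))))
    have := hsle n
    gcongr
  choose Φn Ψn hS hE using hex
  obtain ⟨Φ, Ψ, σ, hσ, hlim, hu, hinv⟩ := PlaneStretch.exists_subseq hb hS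
  have hSL : StretchLimit (C * τ).toNNReal (max (2 * C) 1).toNNReal Ω (fun n => Φn (σ n))
      (fun n => Ψn (σ n)) Φ Ψ := ⟨hO, hb, fun n => hS _, hlim, hu, hinv⟩
  have hdet : ∀ {S : Set (ℝ × ℝ)} {a : ℝ}, MeasurableSet S → S ⊆ Ω →
      (∀ᶠ n in atTop, ∀ᵐ x ∂(volume.restrict S), a ≤ (fderiv ℝ (Φn (σ n)) x).det) →
      ∀ᵐ x ∂(volume.restrict S), a ≤ (fderiv ℝ Φ x).det := fun hSm hSΩ ha =>
    det_ge_of_tendstoUniformly (fun n => (hS (σ n)).lipschitz) (fun n => (hS (σ n)).injective)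
      hlim.lipschitz hlim.injective hu hSm ha
      (ae_restrict_of_ae_restrict_of_subset hSΩ (hlim.det_nonneg hO hb))
  refine hlim.goodStretch hO ⟨fun p hp => ?_, ?_, hSL.distortion fun n => (hE (σ n)).2.2.1, ?_, ?_⟩
  · refine (add_le_add (hSL.eLpNorm_sub_le p) (hSL.eLpNorm_fderiv_le hp)).trans
      (liminf_add_liminf_le fun n => ((hE (σ n)).1 p hp).trans ?_)
    refine ENNReal.ofReal_le_ofReal ?_
    have := hle (σ n)
    gcongr
  · refine (hSL.eLpNorm_sub_le ⊤).trans (liminf_le_of_le (by isBoundedDefault) fun b hb' => ?_)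
    obtain ⟨n, hn⟩ := hb'.exists
    refine (hn.trans (hE (σ n)).2.1).trans (ENNReal.ofReal_le_ofReal ?_)
    have := hsle (σ n)
    gcongr
  · -- `Kₘ ⊆ K_{σ n}` as soon as `n ≥ m`, and the `Kₘ` fill `M` up to a null set.
    have hK : ∀ m, ∀ᵐ x ∂(volume.restrict (Kn m)), 1 + τ ≤ (fderiv ℝ Φ x).det := fun m => by
      refine hdet (hKc m).measurableSet ((hKM m).trans hMΩ) ?_
      filter_upwards [eventually_ge_atTop m] with n hn
      exact ae_restrict_of_ae_restrict_of_subset (hKmono (hn.trans (hσ.id_le n)))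
        (hE (σ n)).2.2.2.1
    have hall : ∀ᵐ x, ∀ m, x ∈ Kn m → 1 + τ ≤ (fderiv ℝ Φ x).det :=
      ae_all_iff.2 fun m => (ae_restrict_iff' (hKc m).measurableSet).1 (hK m)
    rw [ae_restrict_iff' hM]
    filter_upwards [hall, hKae] with x hx1 hx2 hxM
    obtain ⟨m, hm⟩ := hx2 hxM
    exact hx1 m hm
  · refine hdet hO.measurableSet subset_rfl (Eventually.of_forall fun n => ?_)
    filter_upwards [(hE (σ n)).2.2.2.2] with x hx
    refine le_trans ?_ hx
    have h3 : C * Real.sqrt (volume (Kn (σ n))).toReal * τ ≤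
        C * Real.sqrt (volume M).toReal * τ := by
      have := hsle (σ n)
      gcongr
    linarith
end

section
/- Let z₁, z₂, z₃, z₄ ∈ ℝ² be four points, no three of which are collinear, such that their convex hull P is a closed convex quadrilateral whose boundary is the union of the segments [z₁,z₂], [z₂,z₃], [z₃,z₄], [z₄,z₁]. Then there exists a bi-linear map φ : ℝ² → ℝ², i.e. a map of the form φ(x,y) = (a₁xy + a₂x + a₃y + a₄, b₁xy + b₂x + b₃y + b₄) with real constants a₁,…,a₄, b₁,…,b₄, whose restriction to [0,1]² is a smooth diffeomorphism from [0,1]² onto P (a homeomorphism onto P which together with its inverse is smooth, with det ∇φ > 0 on [0,1]²). -/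
open Set

/-!
The map is the bi-linear interpolation `φ(x,y) = z₁ + x(z₂-z₁) + y(z₄-z₁) + xy(z₁-z₂+z₃-z₄)` of the
four vertices. Three observations carry the proof.

* *Orientation.* The midpoint of an edge is a boundary point of the hull, so it has a supporting
  line, which must contain the edge; hence the other two vertices lie strictly on the same side of
  that edge (`oriArea_mul_pos_of_edge`). Thus the four vertex triples, taken in cyclic order, all
  have the same orientation. Reversing the cyclic order, if necessary, makes it positive.
* *Jacobian and injectivity.* The Jacobian of `φ` is an affine function of `(x,y)` whose values at
  the corners of the square are these (doubled) oriented areas, so it is positive on the square.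
  As `φ` is quadratic, `φ(p) - φ(q)` is exactly the derivative of `φ` at the midpoint of `p` and `q`
  applied to `p - q`; as the open half plane `{jac > 0}` is convex, `φ` is injective on it
  (`quadMap_injOn`). The inverse on this half plane is smooth by the inverse function theorem.
* *Surjectivity.* For `p` in the hull and `x ∈ [0,1]`, consider on which side of the directed line
  from `φ(x,0)` to `φ(x,1)` the point `p` lies. The sides for `x = 0` and `x = 1` are opposite, so by
  the intermediate value theorem `p` is on this line for some `x`; the remaining two edge
  inequalities place it between the two end points (`quadMap_surjOn`).
-/

/-- Twice the oriented area of the triangle `p q r`; positive when it is counterclockwise. -/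
def oriArea (p q r : ℝ × ℝ) : ℝ :=
  (q.1 - p.1) * (r.2 - p.2) - (q.2 - p.2) * (r.1 - p.1)

/-- The bi-linear interpolation taking the corners `(0,0), (1,0), (1,1), (0,1)` of the unit square
to `z₁, z₂, z₃, z₄`. -/
def quadMap (z₁ z₂ z₃ z₄ : ℝ × ℝ) (p : ℝ × ℝ) : ℝ × ℝ :=
  ((z₁.1 - z₂.1 + z₃.1 - z₄.1) * p.1 * p.2 + (z₂.1 - z₁.1) * p.1 + (z₄.1 - z₁.1) * p.2 + z₁.1,
    (z₁.2 - z₂.2 + z₃.2 - z₄.2) * p.1 * p.2 + (z₂.2 - z₁.2) * p.1 + (z₄.2 - z₁.2) * p.2 + z₁.2)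

/-- The Jacobian determinant of `quadMap`, written as the affine function determined by its values
at three corners of the square. -/
def jac (z₁ z₂ z₃ z₄ : ℝ × ℝ) (p : ℝ × ℝ) : ℝ :=
  oriArea z₁ z₂ z₄ + p.1 * (oriArea z₁ z₂ z₃ - oriArea z₁ z₂ z₄)
    + p.2 * (oriArea z₁ z₃ z₄ - oriArea z₁ z₂ z₄)

/-! ### Orientation of the vertices -/

lemma oriArea_ne_zero {p q r : ℝ × ℝ} (h : ¬ Collinear ℝ ({p, q, r} : Set (ℝ × ℝ))) :
    oriArea p q r ≠ 0 := by
  intro h0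
  apply h
  by_cases hpq : p = q
  · subst hpq
    simpa using collinear_pair ℝ p r
  have hn : 0 < (q.1 - p.1) ^ 2 + (q.2 - p.2) ^ 2 := by
    by_contra hcon
    apply hpq
    have h1 : q.1 - p.1 = 0 := by nlinarith [sq_nonneg (q.1 - p.1), sq_nonneg (q.2 - p.2)]
    have h2 : q.2 - p.2 = 0 := by nlinarith [sq_nonneg (q.1 - p.1), sq_nonneg (q.2 - p.2)]
    ext <;> linarith
  rw [collinear_iff_of_mem (p₀ := p) (by simp)]
  refine ⟨q - p, ?_⟩
  simp only [mem_insert_iff, mem_singleton_iff, forall_eq_or_imp, forall_eq]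
  refine ⟨⟨0, by simp⟩, ⟨1, by simp⟩,
    -- the coefficient of the orthogonal projection of `r - p` onto `q - p`
    ⟨((q.1 - p.1) * (r.1 - p.1) + (q.2 - p.2) * (r.2 - p.2))
      / ((q.1 - p.1) ^ 2 + (q.2 - p.2) ^ 2), ?_⟩⟩
  unfold oriArea at h0
  ext
  · simp only [vadd_eq_add, Prod.fst_add, Prod.smul_fst, Prod.fst_sub, smul_eq_mul]
    field_simp
    linear_combination -(q.2 - p.2) * h0
  · simp only [vadd_eq_add, Prod.snd_add, Prod.smul_snd, Prod.snd_sub, smul_eq_mul]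
    field_simp
    linear_combination (q.1 - p.1) * h0

lemma interior_convexHull_nonempty {s : Set (ℝ × ℝ)} {p q r : ℝ × ℝ} (hp : p ∈ s) (hq : q ∈ s)
    (hr : r ∈ s) (h : ¬ Collinear ℝ ({p, q, r} : Set (ℝ × ℝ))) :
    (interior (convexHull ℝ s)).Nonempty := by
  rw [interior_convexHull_nonempty_iff_affineSpan_eq_top]
  have hind := affineIndependent_iff_not_collinear_set.2 h
  have htop : affineSpan ℝ (range ![p, q, r]) = ⊤ := by
    rw [hind.affineSpan_eq_top_iff_card_eq_finrank_add_one]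
    simp
  rw [eq_top_iff, ← htop]
  apply affineSpan_mono
  rintro _ ⟨i, rfl⟩
  fin_cases i <;> simpa

/-- If the segment `[p,q]` lies in the boundary of the hull of a set containing `p`, `q`, `r`, `s`,
then `r` and `s` lie on the same side of the line `pq`: that line is the supporting line of the hull
at the midpoint of the segment. -/
lemma oriArea_mul_pos_of_edge {S : Set (ℝ × ℝ)} {p q r s : ℝ × ℝ} (hp : p ∈ S) (hq : q ∈ S)
    (hr : r ∈ S) (hs : s ∈ S) (hpqr : ¬ Collinear ℝ ({p, q, r} : Set (ℝ × ℝ)))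
    (hpqs : oriArea p q s ≠ 0)
    (hseg : segment ℝ p q ⊆ frontier (convexHull ℝ S)) :
    0 < oriArea p q r * oriArea p q s := by
  have hne := interior_convexHull_nonempty hp hq hr hpqr
  have hpqr := oriArea_ne_zero hpqr
  have hconv := convex_convexHull ℝ S
  set m := midpoint ℝ p q with hm
  have hmint : m ∉ interior (convexHull ℝ S) :=
    (hseg (midpoint_mem_segment (𝕜 := ℝ) p q)).2
  obtain ⟨f, hf⟩ := geometric_hahn_banach_open_point hconv.interior isOpen_interior hmint
  have hle : ∀ a ∈ S, f a ≤ f m := by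
    intro a ha
    have hcl : a ∈ closure (interior (convexHull ℝ S)) := by
      rw [hconv.closure_interior_eq_closure_of_nonempty_interior hne]
      exact subset_closure (subset_convexHull ℝ S ha)
    have hsub : closure (interior (convexHull ℝ S)) ⊆ {a | f a ≤ f m} :=
      closure_minimal (fun a ha => (hf a ha).le)
        (isClosed_le f.continuous continuous_const)
    exact hsub hcl
  have hfm : f m = (f p + f q) / 2 := by
    rw [hm, midpoint_eq_smul_add, map_smul, map_add, smul_eq_mul]
    norm_num
    ring
  have hfc : ∀ a : ℝ × ℝ, f a = a.1 * f (1, 0) + a.2 * f (0, 1) := by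
    intro a
    have : a = a.1 • ((1, 0) : ℝ × ℝ) + a.2 • ((0, 1) : ℝ × ℝ) := by ext <;> simp
    conv_lhs => rw [this]
    simp only [map_add, map_smul, smul_eq_mul]
  obtain ⟨c, hc⟩ := hne
  have h0 := hf c hc
  have h1 := hle p hp
  have h2 := hle q hq
  have h3 := hle r hr
  have h4 := hle s hs
  rw [hfm] at h0 h1 h2 h3 h4
  have hpq : f p = f q := by linarith
  rw [← hpq] at h0 h3 h4
  rw [hfc p, hfc q] at hpq
  rw [hfc c, hfc p] at h0
  rw [hfc r, hfc p] at h3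
  rw [hfc s, hfc p] at h4
  generalize f (1, 0) = u at *
  generalize f (0, 1) = v at *
  -- As `f` kills `q - p`, the function `f t - f p` is proportional to `oriArea p q t`, with
  -- factor `K / N`.
  obtain ⟨N, hN⟩ : ∃ N, N = (q.1 - p.1) ^ 2 + (q.2 - p.2) ^ 2 := ⟨_, rfl⟩
  obtain ⟨K, hK⟩ : ∃ K, K = v * (q.1 - p.1) - u * (q.2 - p.2) := ⟨_, rfl⟩
  have key : ∀ t : ℝ × ℝ,
      N * (t.1 * u + t.2 * v - (p.1 * u + p.2 * v)) = K * oriArea p q t := by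
    intro t
    rw [hN, hK]
    unfold oriArea
    linear_combination
      (-(t.1 - p.1) * (q.1 - p.1) - (t.2 - p.2) * (q.2 - p.2)) * hpq
  have hN0 : 0 ≤ N := by rw [hN]; positivity
  have hNpos : 0 < N := by
    refine hN0.lt_of_ne fun h => hpqr ?_
    have h5 : q.1 - p.1 = 0 := by nlinarith [sq_nonneg (q.1 - p.1), sq_nonneg (q.2 - p.2)]
    have h6 : q.2 - p.2 = 0 := by nlinarith [sq_nonneg (q.1 - p.1), sq_nonneg (q.2 - p.2)]
    simp [oriArea, h5, h6]
  have hK0 : K ≠ 0 := by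
    rintro rfl
    have := key c
    nlinarith
  have hr' : K * oriArea p q r ≤ 0 := by rw [← key r]; nlinarith
  have hs' : K * oriArea p q s ≤ 0 := by rw [← key s]; nlinarith
  have hmul := mul_nonneg_of_nonpos_of_nonpos hr' hs'
  have hK2 : 0 < K ^ 2 := by positivity
  refine lt_of_le_of_ne ?_ (mul_ne_zero hpqr hpqs).symm
  refine nonneg_of_mul_nonneg_right (a := K ^ 2) ?_ hK2
  linarith

/-! ### Derivative of the interpolation -/

lemma contDiff_quadMap (z₁ z₂ z₃ z₄ : ℝ × ℝ) :
    ContDiff ℝ (⊤ : ℕ∞) (quadMap z₁ z₂ z₃ z₄) := by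
  unfold quadMap
  fun_prop

lemma det_fderiv_quadMap (z₁ z₂ z₃ z₄ p : ℝ × ℝ) :
    (fderiv ℝ (quadMap z₁ z₂ z₃ z₄) p).det = jac z₁ z₂ z₃ z₄ p := by
  have hlin : ∀ a b c d : ℝ, HasFDerivAt
      (fun p : ℝ × ℝ => a * p.1 * p.2 + b * p.1 + c * p.2 + d)
      ((a * p.2 + b) • ContinuousLinearMap.fst ℝ ℝ ℝ
        + (a * p.1 + c) • ContinuousLinearMap.snd ℝ ℝ ℝ) p := by
    intro a b c d
    have h1 : HasFDerivAt (fun p : ℝ × ℝ => p.1) (ContinuousLinearMap.fst ℝ ℝ ℝ) p :=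
      hasFDerivAt_fst
    have h2 : HasFDerivAt (fun p : ℝ × ℝ => p.2) (ContinuousLinearMap.snd ℝ ℝ ℝ) p :=
      hasFDerivAt_snd
    refine (((((h1.const_mul a).mul h2).add (h1.const_mul b)).add
      (h2.const_mul c)).add_const d).congr_fderiv ?_
    ext <;> simp <;> ring
  have h := (hlin (z₁.1 - z₂.1 + z₃.1 - z₄.1) (z₂.1 - z₁.1) (z₄.1 - z₁.1) z₁.1).prodMk
    (hlin (z₁.2 - z₂.2 + z₃.2 - z₄.2) (z₂.2 - z₁.2) (z₄.2 - z₁.2) z₁.2)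
  rw [← Matrix.toLin_finTwoProd_toContinuousLinearMap] at h
  change HasFDerivAt (quadMap z₁ z₂ z₃ z₄) _ p at h
  rw [h.fderiv]
  simp only [LinearMap.det_toContinuousLinearMap, LinearMap.det_toLin, Matrix.det_fin_two_of,
    jac, oriArea]
  ring

/-! ### Injectivity and smoothness of the inverse -/

/-- `quadMap` is injective on the half plane where its Jacobian is positive. -/
lemma quadMap_injOn (z₁ z₂ z₃ z₄ : ℝ × ℝ) :
    InjOn (quadMap z₁ z₂ z₃ z₄) {p | 0 < jac z₁ z₂ z₃ z₄ p} := by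
  rintro ⟨x, y⟩ hp ⟨x', y'⟩ hq h
  simp only [mem_ofPred_eq] at hp hq
  obtain ⟨h1, h2⟩ := Prod.mk.inj h
  -- By Cramer's rule for the derivative at the midpoint; twice the Jacobian there is the sum of
  -- the Jacobians at the two points.
  have hJ : 0 < jac z₁ z₂ z₃ z₄ (x, y) + jac z₁ z₂ z₃ z₄ (x', y') := add_pos hp hq
  have hx : (jac z₁ z₂ z₃ z₄ (x, y) + jac z₁ z₂ z₃ z₄ (x', y')) * (x - x') = 0 := by
    simp only [jac, oriArea] at h1 h2 ⊢
    linear_combination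
      (2 * (z₄.2 - z₁.2) + (z₁.2 - z₂.2 + z₃.2 - z₄.2) * (x + x')) * h1
      - (2 * (z₄.1 - z₁.1) + (z₁.1 - z₂.1 + z₃.1 - z₄.1) * (x + x')) * h2
  have hy : (jac z₁ z₂ z₃ z₄ (x, y) + jac z₁ z₂ z₃ z₄ (x', y')) * (y - y') = 0 := by
    simp only [jac, oriArea] at h1 h2 ⊢
    linear_combination
      -(2 * (z₂.2 - z₁.2) + (z₁.2 - z₂.2 + z₃.2 - z₄.2) * (y + y')) * h1
      + (2 * (z₂.1 - z₁.1) + (z₁.1 - z₂.1 + z₃.1 - z₄.1) * (y + y')) * h2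
  have hx' := (mul_eq_zero.1 hx).resolve_left hJ.ne'
  have hy' := (mul_eq_zero.1 hy).resolve_left hJ.ne'
  ext <;> simp <;> linarith

lemma isOpen_jac_pos (z₁ z₂ z₃ z₄ : ℝ × ℝ) : IsOpen {p | 0 < jac z₁ z₂ z₃ z₄ p} := by
  apply isOpen_lt continuous_const
  unfold jac
  fun_prop

/-- A left inverse of `quadMap` on the half plane `{jac > 0}` agrees near `quadMap p` with the local
inverse given by the inverse function theorem, without any continuity assumption on it. -/
lemma contDiffAt_leftInverse (z₁ z₂ z₃ z₄ : ℝ × ℝ) {ψ : ℝ × ℝ → ℝ × ℝ}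
    (hψ : ∀ p, 0 < jac z₁ z₂ z₃ z₄ p → ψ (quadMap z₁ z₂ z₃ z₄ p) = p)
    {p : ℝ × ℝ} (hp : 0 < jac z₁ z₂ z₃ z₄ p) :
    ContDiffAt ℝ (⊤ : ℕ∞) ψ (quadMap z₁ z₂ z₃ z₄ p) := by
  have hsm := (contDiff_quadMap z₁ z₂ z₃ z₄).contDiffAt (x := p)
  have hn : ((⊤ : ℕ∞) : WithTop ℕ∞) ≠ 0 := by simp
  have hdet : (fderiv ℝ (quadMap z₁ z₂ z₃ z₄) p).det ≠ 0 := by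
    rw [det_fderiv_quadMap]
    exact hp.ne'
  have hd : HasFDerivAt (quadMap z₁ z₂ z₃ z₄)
      (((fderiv ℝ (quadMap z₁ z₂ z₃ z₄) p).toContinuousLinearEquivOfDetNeZero hdet :
        (ℝ × ℝ) ≃L[ℝ] (ℝ × ℝ)) : (ℝ × ℝ) →L[ℝ] (ℝ × ℝ)) p := by
    rw [ContinuousLinearMap.coe_toContinuousLinearEquivOfDetNeZero]
    exact (hsm.differentiableAt hn).hasFDerivAt
  refine (hsm.to_localInverse hd hn).congr_of_eventuallyEq ?_
  apply (hsm.hasStrictFDerivAt' hd hn).localInverse_unique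
  filter_upwards [(isOpen_jac_pos z₁ z₂ z₃ z₄).mem_nhds hp] with a ha using hψ a ha

/-! ### The image of the square -/

lemma convexCombo_pos {t a b : ℝ} (h0 : 0 ≤ t) (h1 : t ≤ 1) (ha : 0 < a) (hb : 0 < b) :
    0 < (1 - t) * a + t * b := by
  rcases h0.eq_or_lt with rfl | h0
  · simpa using ha
  · have := mul_nonneg (sub_nonneg.2 h1) ha.le
    have := mul_pos h0 hb
    linarith

lemma jac_pos {z₁ z₂ z₃ z₄ : ℝ × ℝ} (h123 : 0 < oriArea z₁ z₂ z₃) (h124 : 0 < oriArea z₁ z₂ z₄)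
    (h134 : 0 < oriArea z₁ z₃ z₄) (h234 : 0 < oriArea z₂ z₃ z₄) {p : ℝ × ℝ}
    (hp : p ∈ Icc (0 : ℝ) 1 ×ˢ Icc (0 : ℝ) 1) : 0 < jac z₁ z₂ z₃ z₄ p := by
  obtain ⟨x, y⟩ := p
  obtain ⟨⟨hx0, hx1⟩, hy0, hy1⟩ := hp
  simp only at hx0 hx1 hy0 hy1
  -- The two triangulations of the quadrilateral have the same total area.
  have hsum : oriArea z₁ z₂ z₃ + oriArea z₁ z₃ z₄ = oriArea z₁ z₂ z₄ + oriArea z₂ z₃ z₄ := by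
    unfold oriArea
    ring
  have e : jac z₁ z₂ z₃ z₄ (x, y) =
      (1 - y) * ((1 - x) * oriArea z₁ z₂ z₄ + x * oriArea z₁ z₂ z₃)
        + y * ((1 - x) * oriArea z₁ z₃ z₄ + x * oriArea z₂ z₃ z₄) := by
    simp only [jac]
    linear_combination x * y * hsum
  rw [e]
  exact convexCombo_pos hy0 hy1 (convexCombo_pos hx0 hx1 h124 h123)
    (convexCombo_pos hx0 hx1 h134 h234)

lemma quadMap_mapsTo (z₁ z₂ z₃ z₄ : ℝ × ℝ) :
    MapsTo (quadMap z₁ z₂ z₃ z₄) (Icc (0 : ℝ) 1 ×ˢ Icc (0 : ℝ) 1)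
      (convexHull ℝ ({z₁, z₂, z₃, z₄} : Set (ℝ × ℝ))) := by
  rintro ⟨x, y⟩ ⟨⟨hx0, hx1⟩, hy0, hy1⟩
  simp only at hx0 hx1 hy0 hy1
  have hc := convex_convexHull ℝ ({z₁, z₂, z₃, z₄} : Set (ℝ × ℝ))
  have hm : ∀ z ∈ ({z₁, z₂, z₃, z₄} : Set (ℝ × ℝ)), z ∈ convexHull ℝ {z₁, z₂, z₃, z₄} :=
    fun z hz => subset_convexHull ℝ _ hz
  have hbot := hc (hm z₁ (by simp)) (hm z₂ (by simp)) (sub_nonneg.2 hx1) hx0 (by ring)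
  have htop := hc (hm z₄ (by simp)) (hm z₃ (by simp)) (sub_nonneg.2 hx1) hx0 (by ring)
  convert hc hbot htop (sub_nonneg.2 hy1) hy0 (by ring) using 1
  ext <;> simp [quadMap] <;> ring

lemma convexHull_subset_halfPlane {S : Set (ℝ × ℝ)} {p q : ℝ × ℝ}
    (h : ∀ z ∈ S, 0 ≤ oriArea p q z) {z : ℝ × ℝ} (hz : z ∈ convexHull ℝ S) :
    0 ≤ oriArea p q z := by
  have hconv : Convex ℝ {z | 0 ≤ oriArea p q z} := by
    intro a ha b hb s t hs ht hst
    simp only [mem_ofPred_eq] at ha hb ⊢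
    have e : oriArea p q (s • a + t • b) = s * oriArea p q a + t * oriArea p q b := by
      obtain rfl : s = 1 - t := by linarith
      simp only [oriArea, Prod.fst_add, Prod.snd_add, Prod.smul_fst, Prod.smul_snd, smul_eq_mul]
      ring
    rw [e]
    positivity
  exact convexHull_min h hconv hz

lemma quadMap_surjOn {z₁ z₂ z₃ z₄ : ℝ × ℝ} (h123 : 0 < oriArea z₁ z₂ z₃)
    (h124 : 0 < oriArea z₁ z₂ z₄) (h134 : 0 < oriArea z₁ z₃ z₄) (h234 : 0 < oriArea z₂ z₃ z₄) :
    SurjOn (quadMap z₁ z₂ z₃ z₄) (Icc (0 : ℝ) 1 ×ˢ Icc (0 : ℝ) 1)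
      (convexHull ℝ ({z₁, z₂, z₃, z₄} : Set (ℝ × ℝ))) := by
  intro p hp
  have e1 : 0 ≤ oriArea z₁ z₂ p := convexHull_subset_halfPlane (by
    simp only [mem_insert_iff, mem_singleton_iff, forall_eq_or_imp, forall_eq]
    refine ⟨?_, ?_, h123.le, h124.le⟩ <;> simp only [oriArea] <;> apply le_of_eq <;> ring) hp
  have e2 : 0 ≤ oriArea z₂ z₃ p := convexHull_subset_halfPlane (by
    simp only [mem_insert_iff, mem_singleton_iff, forall_eq_or_imp, forall_eq]
    unfold oriArea at *
    refine ⟨?_, ?_, ?_, ?_⟩ <;> linarith) hp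
  have e3 : 0 ≤ oriArea z₃ z₄ p := convexHull_subset_halfPlane (by
    simp only [mem_insert_iff, mem_singleton_iff, forall_eq_or_imp, forall_eq]
    unfold oriArea at *
    refine ⟨?_, ?_, ?_, ?_⟩ <;> linarith) hp
  have e4 : 0 ≤ oriArea z₄ z₁ p := convexHull_subset_halfPlane (by
    simp only [mem_insert_iff, mem_singleton_iff, forall_eq_or_imp, forall_eq]
    unfold oriArea at *
    refine ⟨?_, ?_, ?_, ?_⟩ <;> linarith) hp
  let g : ℝ → ℝ := fun x =>
    oriArea (quadMap z₁ z₂ z₃ z₄ (x, 0)) p (quadMap z₁ z₂ z₃ z₄ (x, 1))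
  have hg : Continuous g := by
    simp only [g, oriArea, quadMap]
    fun_prop
  have hg0 : 0 ≤ g 0 := by
    refine e4.trans (le_of_eq ?_)
    simp only [g, oriArea, quadMap]
    ring
  have hg1 : g 1 ≤ 0 := by
    refine le_trans (le_of_eq ?_) (neg_nonpos.2 e2)
    simp only [g, oriArea, quadMap]
    ring
  obtain ⟨x, ⟨hx0, hx1⟩, hx⟩ :=
    intermediate_value_Icc' zero_le_one hg.continuousOn (show (0 : ℝ) ∈ Icc (g 1) (g 0) from
      ⟨hg1, hg0⟩)
  have hβ : 0 < (1 - x) * oriArea z₁ z₂ z₄ + x * oriArea z₁ z₂ z₃ :=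
    convexCombo_pos hx0 hx1 h124 h123
  have hγ : 0 < (1 - x) * oriArea z₁ z₃ z₄ + x * oriArea z₂ z₃ z₄ :=
    convexCombo_pos hx0 hx1 h134 h234
  -- `y` is the ratio of the distances of `p` and of `φ(x,1)` to the line `z₁z₂`.
  obtain ⟨y, hy⟩ : ∃ y, y = oriArea z₁ z₂ p
      / ((1 - x) * oriArea z₁ z₂ z₄ + x * oriArea z₁ z₂ z₃) := ⟨_, rfl⟩
  have hy0 : 0 ≤ y := by rw [hy]; positivity
  have hyp : quadMap z₁ z₂ z₃ z₄ (x, y) = p := by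
    rw [eq_div_iff hβ.ne'] at hy
    simp only [g] at hx
    ext
    · apply mul_left_cancel₀ hβ.ne'
      simp only [oriArea, quadMap] at hx hy ⊢
      linear_combination ((z₁.1 - z₂.1 + z₃.1 - z₄.1) * x + (z₄.1 - z₁.1)) * hy
        - (z₂.1 - z₁.1) * hx
    · apply mul_left_cancel₀ hβ.ne'
      simp only [oriArea, quadMap] at hx hy ⊢
      linear_combination ((z₁.2 - z₂.2 + z₃.2 - z₄.2) * x + (z₄.2 - z₁.2)) * hy
        - (z₂.2 - z₁.2) * hx
  have hy1 : y ≤ 1 := by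
    have e : oriArea z₃ z₄ p
        = ((1 - x) * oriArea z₁ z₃ z₄ + x * oriArea z₂ z₃ z₄) * (1 - y) := by
      rw [← hyp]
      simp only [oriArea, quadMap]
      ring
    rw [e] at e3
    exact sub_nonneg.1 (nonneg_of_mul_nonneg_right e3 hγ)
  exact ⟨(x, y), ⟨⟨hx0, hx1⟩, hy0, hy1⟩, hyp⟩

/-- The result for vertices in counterclockwise cyclic order. -/
theorem exists_of_pos {z₁ z₂ z₃ z₄ : ℝ × ℝ} (h123 : 0 < oriArea z₁ z₂ z₃)
    (h124 : 0 < oriArea z₁ z₂ z₄) (h134 : 0 < oriArea z₁ z₃ z₄) (h234 : 0 < oriArea z₂ z₃ z₄) :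
    ∃ a₁ a₂ a₃ a₄ b₁ b₂ b₃ b₄ : ℝ, ∃ φ ψ : ℝ × ℝ → ℝ × ℝ,
      (∀ x y : ℝ, φ (x, y) =
        (a₁ * x * y + a₂ * x + a₃ * y + a₄, b₁ * x * y + b₂ * x + b₃ * y + b₄)) ∧
      Set.BijOn φ (Set.Icc 0 1 ×ˢ Set.Icc 0 1)
        (convexHull ℝ ({z₁, z₂, z₃, z₄} : Set (ℝ × ℝ))) ∧
      Set.InvOn ψ φ (Set.Icc 0 1 ×ˢ Set.Icc 0 1)
        (convexHull ℝ ({z₁, z₂, z₃, z₄} : Set (ℝ × ℝ))) ∧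
      ContDiff ℝ (⊤ : ℕ∞) φ ∧
      ContDiffOn ℝ (⊤ : ℕ∞) ψ (convexHull ℝ ({z₁, z₂, z₃, z₄} : Set (ℝ × ℝ))) ∧
      ContinuousOn ψ (convexHull ℝ ({z₁, z₂, z₃, z₄} : Set (ℝ × ℝ))) ∧
      ∀ x ∈ Set.Icc (0:ℝ) 1 ×ˢ Set.Icc (0:ℝ) 1, 0 < (fderiv ℝ φ x).det := by
  have hsq : Icc (0 : ℝ) 1 ×ˢ Icc (0 : ℝ) 1 ⊆ {p | 0 < jac z₁ z₂ z₃ z₄ p} :=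
    fun p hp => jac_pos h123 h124 h134 h234 hp
  have hinj := quadMap_injOn z₁ z₂ z₃ z₄
  have hsurj := quadMap_surjOn h123 h124 h134 h234
  have hψ := hinj.leftInvOn_invFunOn
  set ψ := Function.invFunOn (quadMap z₁ z₂ z₃ z₄) {p | 0 < jac z₁ z₂ z₃ z₄ p}
  have hsmooth : ContDiffOn ℝ (⊤ : ℕ∞) ψ (convexHull ℝ ({z₁, z₂, z₃, z₄} : Set (ℝ × ℝ))) := by
    intro w hw
    obtain ⟨p, hp, rfl⟩ := hsurj hw
    exact (contDiffAt_leftInverse z₁ z₂ z₃ z₄ (fun p hp => hψ hp) (hsq hp)).contDiffWithinAt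
  refine ⟨_, _, _, _, _, _, _, _, quadMap z₁ z₂ z₃ z₄, ψ, fun x y => rfl,
    ⟨quadMap_mapsTo z₁ z₂ z₃ z₄, hinj.mono hsq, hsurj⟩, ⟨hψ.mono hsq, ?_⟩,
    contDiff_quadMap z₁ z₂ z₃ z₄, hsmooth, hsmooth.continuousOn, ?_⟩
  · intro w hw
    obtain ⟨p, hp, rfl⟩ := hsurj hw
    rw [hψ (hsq hp)]
  · intro p hp
    rw [det_fderiv_quadMap]
    exact hsq hp

/-- **Bi-linear parametrization of a convex quadrilateral.**  If `z₁ z₂ z₃ z₄` are the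
vertices (no three collinear) of a closed convex quadrilateral `P = conv {z₁,z₂,z₃,z₄}`
whose boundary is `[z₁,z₂] ∪ [z₂,z₃] ∪ [z₃,z₄] ∪ [z₄,z₁]`, then there is a bi-linear map
`φ(x,y) = (a₁xy + a₂x + a₃y + a₄, b₁xy + b₂x + b₃y + b₄)` whose restriction to `[0,1]²` is a
smooth diffeomorphism onto `P` (with smooth inverse and `det ∇φ > 0` on `[0,1]²`). -/
theorem bilinear_diffeo_of_convex_quadrilateral
    (z₁ z₂ z₃ z₄ : ℝ × ℝ)
    (h123 : ¬ Collinear ℝ ({z₁, z₂, z₃} : Set (ℝ × ℝ)))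
    (h124 : ¬ Collinear ℝ ({z₁, z₂, z₄} : Set (ℝ × ℝ)))
    (h134 : ¬ Collinear ℝ ({z₁, z₃, z₄} : Set (ℝ × ℝ)))
    (h234 : ¬ Collinear ℝ ({z₂, z₃, z₄} : Set (ℝ × ℝ)))
    (hbdry : frontier (convexHull ℝ ({z₁, z₂, z₃, z₄} : Set (ℝ × ℝ))) =
      segment ℝ z₁ z₂ ∪ segment ℝ z₂ z₃ ∪ segment ℝ z₃ z₄ ∪ segment ℝ z₄ z₁) :
    ∃ a₁ a₂ a₃ a₄ b₁ b₂ b₃ b₄ : ℝ, ∃ φ ψ : ℝ × ℝ → ℝ × ℝ,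
      (∀ x y : ℝ, φ (x, y) =
        (a₁ * x * y + a₂ * x + a₃ * y + a₄, b₁ * x * y + b₂ * x + b₃ * y + b₄)) ∧
      Set.BijOn φ (Set.Icc 0 1 ×ˢ Set.Icc 0 1)
        (convexHull ℝ ({z₁, z₂, z₃, z₄} : Set (ℝ × ℝ))) ∧
      Set.InvOn ψ φ (Set.Icc 0 1 ×ˢ Set.Icc 0 1)
        (convexHull ℝ ({z₁, z₂, z₃, z₄} : Set (ℝ × ℝ))) ∧
      ContDiff ℝ (⊤ : ℕ∞) φ ∧
      ContDiffOn ℝ (⊤ : ℕ∞) ψ (convexHull ℝ ({z₁, z₂, z₃, z₄} : Set (ℝ × ℝ))) ∧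
      ContinuousOn ψ (convexHull ℝ ({z₁, z₂, z₃, z₄} : Set (ℝ × ℝ))) ∧
      ∀ x ∈ Set.Icc (0:ℝ) 1 ×ˢ Set.Icc (0:ℝ) 1, 0 < (fderiv ℝ φ x).det := by
  have m₁ : z₁ ∈ ({z₁, z₂, z₃, z₄} : Set (ℝ × ℝ)) := by simp
  have m₂ : z₂ ∈ ({z₁, z₂, z₃, z₄} : Set (ℝ × ℝ)) := by simp
  have m₃ : z₃ ∈ ({z₁, z₂, z₃, z₄} : Set (ℝ × ℝ)) := by simp
  have m₄ : z₄ ∈ ({z₁, z₂, z₃, z₄} : Set (ℝ × ℝ)) := by simp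
  have c231 : oriArea z₂ z₃ z₁ = oriArea z₁ z₂ z₃ := by unfold oriArea; ring
  have c341 : oriArea z₃ z₄ z₁ = oriArea z₁ z₃ z₄ := by unfold oriArea; ring
  have c342 : oriArea z₃ z₄ z₂ = oriArea z₂ z₃ z₄ := by unfold oriArea; ring
  have s12 : 0 < oriArea z₁ z₂ z₃ * oriArea z₁ z₂ z₄ :=
    oriArea_mul_pos_of_edge m₁ m₂ m₃ m₄ h123 (oriArea_ne_zero h124)
      (fun w hw => hbdry ▸ Or.inl (Or.inl (Or.inl hw)))
  have s23 : 0 < oriArea z₂ z₃ z₄ * oriArea z₁ z₂ z₃ := by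
    rw [← c231]
    exact oriArea_mul_pos_of_edge m₂ m₃ m₄ m₁ h234 (c231 ▸ oriArea_ne_zero h123)
      (fun w hw => hbdry ▸ Or.inl (Or.inl (Or.inr hw)))
  have s34 : 0 < oriArea z₁ z₃ z₄ * oriArea z₂ z₃ z₄ := by
    rw [← c341, ← c342]
    refine oriArea_mul_pos_of_edge m₃ m₄ m₁ m₂ ?_ (c342 ▸ oriArea_ne_zero h234)
      (fun w hw => hbdry ▸ Or.inl (Or.inr hw))
    rwa [show ({z₃, z₄, z₁} : Set (ℝ × ℝ)) = {z₁, z₃, z₄} by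
      rw [pair_comm z₄ z₁, insert_comm]]
  rcases (oriArea_ne_zero h123).lt_or_gt with hneg | hpos
  · have n124 := neg_of_mul_pos_right s12 hneg.le
    have n234 := neg_of_mul_pos_left s23 hneg.le
    have n134 := neg_of_mul_pos_left s34 n234.le
    have hset : ({z₁, z₂, z₃, z₄} : Set (ℝ × ℝ)) = {z₁, z₄, z₃, z₂} := by
      ext w
      simp only [mem_insert_iff, mem_singleton_iff]
      tauto
    rw [hset]
    apply exists_of_pos <;> unfold oriArea at * <;> linarith
  · have p124 := pos_of_mul_pos_right s12 hpos.le
    have p234 := pos_of_mul_pos_left s23 hpos.le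
    have p134 := pos_of_mul_pos_left s34 p234.le
    exact exists_of_pos hpos p124 p134 p234
end

section
/- Let α, β > 0 with α + β > 1, and define φ : ℝ² → ℝ² by φ(x,y) = ((α−1)xy + x, (β−1)xy + y). Then φ is injective on [0,1]², det ∇φ(x,y) > 0 for all (x,y) ∈ [0,1]², φ(0,0) = (0,0), φ(1,0) = (1,0), φ(1,1) = (α,β), φ(0,1) = (0,1), and φ([0,1]²) equals the convex hull of the four points (0,0), (1,0), (α,β), (0,1); in particular φ restricted to [0,1]² is a smooth diffeomorphism onto this convex quadrilateral. -/
/-!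
Put `a = α - 1`, `b = β - 1`. The Jacobian determinant of `φ` is `D = 1 + a y + b x`, an affine
function whose values `1, α, β, α + β - 1` at the corners of the square are positive, so `D > 0`
on the whole square.

With `(u, v) = φ (x, y)` and `w = b u - a v` one has `w = b x - a y`, and therefore
`D² = (1 - w)² + 4 b u`, `1 - w + D = 2 (1 + a y)` and `1 + w + D = 2 (1 + b x)`. Hence
`x = 2 u / (1 - w + D)` and `y = 2 v / (1 + w + D)` with `D` the square root of `(1 - w)² + 4 b u`.
This explicit left inverse is smooth wherever the radicand and the denominators are nonzero, in
particular on the image of the square.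

The image lies in the convex hull because `φ (x, y)` is the bilinear interpolation of the four
vertices. Conversely, the hull lies in the intersection of four half-planes, one per edge, and the
inequalities of two of them say exactly that the quadratic `b x² + (1 - w) x - u` changes sign on
`[0, 1]`; a root `x` together with `y = v / (1 + b x)` is a preimage, and the remaining two
inequalities give `y ∈ [0, 1]`.
-/

open Set

/-- The affine function below is the Jacobian determinant of the bilinear map; it is positive on the
unit square because it is positive at the four corners. -/
lemma bilinear_jacobian_pos {α β x y : ℝ} (hα : 0 < α) (hβ : 0 < β) (hαβ : 1 < α + β)
    (hx0 : 0 ≤ x) (hx1 : x ≤ 1) (hy0 : 0 ≤ y) (hy1 : y ≤ 1) :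
    0 < 1 + (α - 1) * y + (β - 1) * x := by
  -- Affine in `y` for fixed `x`, so it suffices to look at `y = 0` and `y = 1`.
  have h0 : 0 < 1 + (β - 1) * x := by
    rcases hx1.lt_or_eq with h | h
    · nlinarith [mul_nonneg hβ.le hx0]
    · subst h; linarith
  have h1 : 0 < α + (β - 1) * x := by
    rcases hx1.lt_or_eq with h | h
    · nlinarith [mul_nonneg hx0 (sub_nonneg.2 hαβ.le), mul_pos hα (sub_pos.2 h)]
    · subst h; linarith
  rcases hy1.lt_or_eq with h | h
  · nlinarith [mul_nonneg hy0 h1.le, mul_pos (sub_pos.2 h) h0]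
  · subst h; linarith

/-- The hull lies in the four half-planes bounded by the edges of the quadrilateral: these are
convex and contain the vertices. -/
lemma halfplanes_of_mem_hull {α β : ℝ} (hα : 0 < α) (hβ : 0 < β) (hαβ : 1 < α + β) {p : ℝ × ℝ}
    (hp : p ∈ convexHull ℝ ({(0, 0), (1, 0), (α, β), (0, 1)} : Set (ℝ × ℝ))) :
    0 ≤ p.1 ∧ 0 ≤ p.2 ∧ β * p.1 - (α - 1) * p.2 ≤ β ∧ α * p.2 - (β - 1) * p.1 ≤ α := by
  have hconv : Convex ℝ {p : ℝ × ℝ | 0 ≤ p.1 ∧ 0 ≤ p.2 ∧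
      β * p.1 - (α - 1) * p.2 ≤ β ∧ α * p.2 - (β - 1) * p.1 ≤ α} := by
    rintro ⟨u, v⟩ ⟨h1, h2, h3, h4⟩ ⟨u', v'⟩ ⟨k1, k2, k3, k4⟩ s t hs ht hst
    obtain rfl : t = 1 - s := by linarith
    simp only [mem_ofPred_eq, Prod.smul_mk, Prod.mk_add_mk, smul_eq_mul] at *
    refine ⟨by positivity, by positivity, ?_, ?_⟩
    · nlinarith [mul_le_mul_of_nonneg_left h3 hs, mul_le_mul_of_nonneg_left k3 ht]
    · nlinarith [mul_le_mul_of_nonneg_left h4 hs, mul_le_mul_of_nonneg_left k4 ht]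
  refine convexHull_min ?_ hconv hp
  rintro q (rfl | rfl | rfl | rfl) <;> simp only [mem_ofPred_eq] <;>
    refine ⟨?_, ?_, ?_, ?_⟩ <;> nlinarith

/-- A point satisfying the edge inequalities has a preimage in the unit square. -/
lemma exists_preimage_of_halfplanes {α β u v : ℝ} (hα : 0 < α) (hβ : 0 < β) (hαβ : 1 < α + β)
    (hu : 0 ≤ u) (hv : 0 ≤ v) (h3 : β * u - (α - 1) * v ≤ β) (h4 : α * v - (β - 1) * u ≤ α) :
    ∃ x ∈ Icc (0 : ℝ) 1, ∃ y ∈ Icc (0 : ℝ) 1,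
      (α - 1) * x * y + x = u ∧ (β - 1) * x * y + y = v := by
  obtain ⟨x, ⟨hx0, hx1⟩, hx⟩ : ∃ x ∈ Icc (0 : ℝ) 1,
      (β - 1) * x ^ 2 + (1 - ((β - 1) * u - (α - 1) * v)) * x - u = 0 := by
    have hc : ContinuousOn (fun x : ℝ =>
        (β - 1) * x ^ 2 + (1 - ((β - 1) * u - (α - 1) * v)) * x - u) (Icc 0 1) := by fun_prop
    exact intermediate_value_Icc zero_le_one hc ⟨by simpa using hu, by nlinarith⟩
  have hpos : 0 < 1 + (β - 1) * x := by
    simpa using bilinear_jacobian_pos hα hβ hαβ hx0 hx1 le_rfl zero_le_one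
  have hpos1 : 0 < 1 + (α - 1) * 1 + (β - 1) * x :=
    bilinear_jacobian_pos hα hβ hαβ hx0 hx1 zero_le_one le_rfl
  obtain ⟨y, hy⟩ : ∃ y, y = v / (1 + (β - 1) * x) := ⟨_, rfl⟩
  have hyv : y * (1 + (β - 1) * x) = v := by rw [hy]; field_simp
  have hxu : (α - 1) * x * y + x = u := by
    have : (1 + (β - 1) * x) * ((α - 1) * x * y + x - u) = 0 := by
      linear_combination hx + (α - 1) * x * hyv
    rcases mul_eq_zero.1 this with h | h <;> linarith
  refine ⟨x, ⟨hx0, hx1⟩, y, ⟨by rw [hy]; positivity, ?_⟩, hxu, by linarith⟩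
  -- The last edge inequality factors as `(y - 1) (α + (β - 1) x) ≤ 0`.
  have : (y - 1) * (1 + (α - 1) * 1 + (β - 1) * x) ≤ 0 := by
    rw [← hxu, ← hyv] at h4
    nlinarith
  by_contra! h
  nlinarith [mul_pos (sub_pos.2 h) hpos1]

/-- The inverse of the bilinear map in closed form: with `w = (β - 1) u - (α - 1) v` and
`D = √((1 - w)² + 4 (β - 1) u)`, the preimage of `(u, v)` is `(2 u / (1 - w + D), 2 v / (1 + w + D))`.
-/
noncomputable def bilinearInverse (α β : ℝ) (p : ℝ × ℝ) : ℝ × ℝ :=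
  (2 * p.1 / (1 - ((β - 1) * p.1 - (α - 1) * p.2) +
      √((1 - ((β - 1) * p.1 - (α - 1) * p.2)) ^ 2 + 4 * (β - 1) * p.1)),
    2 * p.2 / (1 + ((β - 1) * p.1 - (α - 1) * p.2) +
      √((1 - ((β - 1) * p.1 - (α - 1) * p.2)) ^ 2 + 4 * (β - 1) * p.1)))

/-- **The explicit bi-linear map onto the quadrilateral `conv {(0,0),(1,0),(α,β),(0,1)}`.**
For `α, β > 0` with `α + β > 1`, the map `φ(x,y) = ((α−1)xy + x, (β−1)xy + y)` is injective
on `[0,1]²`, has everywhere positive Jacobian determinant on `[0,1]²`, maps the corners of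
the unit square to `(0,0), (1,0), (α,β), (0,1)`, and maps `[0,1]²` onto the convex hull of
these four points; in particular it restricts to a smooth diffeomorphism onto this convex
quadrilateral. -/
theorem bilinear_map_onto_quadrilateral
    (α β : ℝ) (hα : 0 < α) (hβ : 0 < β) (hαβ : 1 < α + β)
    (φ : ℝ × ℝ → ℝ × ℝ)
    (hφ : ∀ x y : ℝ, φ (x, y) = ((α - 1) * x * y + x, (β - 1) * x * y + y)) :
    Set.InjOn φ (Set.Icc 0 1 ×ˢ Set.Icc 0 1) ∧
    (∀ x ∈ Set.Icc (0:ℝ) 1 ×ˢ Set.Icc (0:ℝ) 1, 0 < (fderiv ℝ φ x).det) ∧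
    φ (0, 0) = (0, 0) ∧ φ (1, 0) = (1, 0) ∧ φ (1, 1) = (α, β) ∧ φ (0, 1) = (0, 1) ∧
    φ '' (Set.Icc 0 1 ×ˢ Set.Icc 0 1) =
      convexHull ℝ ({(0, 0), (1, 0), (α, β), (0, 1)} : Set (ℝ × ℝ)) ∧
    ∃ ψ : ℝ × ℝ → ℝ × ℝ,
      Set.InvOn ψ φ (Set.Icc 0 1 ×ˢ Set.Icc 0 1)
        (convexHull ℝ ({(0, 0), (1, 0), (α, β), (0, 1)} : Set (ℝ × ℝ))) ∧
      ContDiffOn ℝ (⊤ : ℕ∞) ψ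
        (convexHull ℝ ({(0, 0), (1, 0), (α, β), (0, 1)} : Set (ℝ × ℝ))) := by
  have ha : ∀ {x y : ℝ}, x ∈ Icc (0 : ℝ) 1 → y ∈ Icc (0 : ℝ) 1 →
      0 < 1 + (α - 1) * y ∧ 0 < 1 + (β - 1) * x ∧ 0 < 1 + (α - 1) * y + (β - 1) * x := by
    intro x y hx hy
    refine ⟨?_, ?_, bilinear_jacobian_pos hα hβ hαβ hx.1 hx.2 hy.1 hy.2⟩
    · simpa using bilinear_jacobian_pos hα hβ hαβ le_rfl zero_le_one hy.1 hy.2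
    · simpa using bilinear_jacobian_pos hα hβ hαβ hx.1 hx.2 le_rfl zero_le_one
  have hrad : ∀ x y : ℝ, (1 - ((β - 1) * ((α - 1) * x * y + x) -
      (α - 1) * ((β - 1) * x * y + y))) ^ 2 + 4 * (β - 1) * ((α - 1) * x * y + x) =
      (1 + (α - 1) * y + (β - 1) * x) ^ 2 := by
    intro x y; ring
  have himage : φ '' (Set.Icc 0 1 ×ˢ Set.Icc 0 1) =
      convexHull ℝ ({(0, 0), (1, 0), (α, β), (0, 1)} : Set (ℝ × ℝ)) := by
    apply Subset.antisymm
    · rintro _ ⟨⟨x, y⟩, ⟨⟨hx0, hx1⟩, hy0, hy1⟩, rfl⟩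
      simp only at hx0 hx1 hy0 hy1
      have hC := convex_convexHull ℝ ({(0, 0), (1, 0), (α, β), (0, 1)} : Set (ℝ × ℝ))
      have hS := subset_convexHull ℝ ({(0, 0), (1, 0), (α, β), (0, 1)} : Set (ℝ × ℝ))
      -- Interpolate along the edges `y = 0` and `y = 1`, then between the two points obtained.
      have hbot := hC (hS (by simp : ((0, 0) : ℝ × ℝ) ∈ _)) (hS (by simp : ((1, 0) : ℝ × ℝ) ∈ _))
        (sub_nonneg.2 hx1) hx0 (by ring)
      have htop := hC (hS (by simp : ((0, 1) : ℝ × ℝ) ∈ _)) (hS (by simp : ((α, β) : ℝ × ℝ) ∈ _))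
        (sub_nonneg.2 hx1) hx0 (by ring)
      convert hC hbot htop (sub_nonneg.2 hy1) hy0 (by ring) using 1
      rw [hφ]
      ext <;> simp <;> ring
    · rintro ⟨u, v⟩ hp
      obtain ⟨h1, h2, h3, h4⟩ := halfplanes_of_mem_hull hα hβ hαβ hp
      obtain ⟨x, hx, y, hy, hxu, hyv⟩ := exists_preimage_of_halfplanes hα hβ hαβ h1 h2 h3 h4
      exact ⟨(x, y), ⟨hx, hy⟩, by rw [hφ, hxu, hyv]⟩
  have hleft : LeftInvOn (bilinearInverse α β) φ (Icc 0 1 ×ˢ Icc 0 1) := by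
    rintro ⟨x, y⟩ ⟨hx, hy⟩
    obtain ⟨p1, p2, p3⟩ := ha hx hy
    rw [hφ]
    simp only [bilinearInverse]
    rw [hrad, Real.sqrt_sq p3.le]
    ext
    · rw [div_eq_iff (by nlinarith)]; ring
    · rw [div_eq_iff (by nlinarith)]; ring
  refine ⟨hleft.injOn, ?_, by simp [hφ], by simp [hφ], by simp [hφ], by simp [hφ], himage,
    bilinearInverse α β, ⟨hleft, ?_⟩, ?_⟩
  · rintro ⟨x, y⟩ ⟨hx, hy⟩
    have hφ' : φ = fun p : ℝ × ℝ =>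
        ((α - 1) * p.1 * p.2 + p.1, (β - 1) * p.1 * p.2 + p.2) := by
      funext p; exact hφ p.1 p.2
    have hd : HasFDerivAt φ (LinearMap.toContinuousLinearMap (Matrix.toLin
        (Module.Basis.finTwoProd ℝ) (Module.Basis.finTwoProd ℝ)
        !![1 + (α - 1) * y, (α - 1) * x; (β - 1) * y, 1 + (β - 1) * x])) (x, y) := by
      rw [hφ', Matrix.toLin_finTwoProd_toContinuousLinearMap]
      have h1 : HasFDerivAt (fun p : ℝ × ℝ => p.1) (ContinuousLinearMap.fst ℝ ℝ ℝ) (x, y) :=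
        hasFDerivAt_fst
      have h2 : HasFDerivAt (fun p : ℝ × ℝ => p.2) (ContinuousLinearMap.snd ℝ ℝ ℝ) (x, y) :=
        hasFDerivAt_snd
      refine HasFDerivAt.congr_fderiv ((((h1.const_mul (α - 1)).mul h2).add h1).prodMk
        (((h1.const_mul (β - 1)).mul h2).add h2)) ?_
      ext <;> simp <;> ring
    rw [hd.fderiv, LinearMap.det_toContinuousLinearMap, LinearMap.det_toLin, Matrix.det_fin_two_of]
    nlinarith [(ha hx hy).2.2]
  · rw [← himage]
    rintro _ ⟨q, hq, rfl⟩
    rw [hleft hq]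
  · rw [← himage]
    rintro _ ⟨⟨x, y⟩, ⟨hx, hy⟩, rfl⟩
    obtain ⟨p1, p2, p3⟩ := ha hx hy
    apply ContDiffAt.contDiffWithinAt
    rw [hφ]
    have hD : ContDiffAt ℝ (⊤ : ℕ∞) (fun p : ℝ × ℝ =>
        √((1 - ((β - 1) * p.1 - (α - 1) * p.2)) ^ 2 + 4 * (β - 1) * p.1))
        ((α - 1) * x * y + x, (β - 1) * x * y + y) := by
      apply ContDiffAt.sqrt (by fun_prop)
      simp only
      rw [hrad]
      positivity
    unfold bilinearInverse
    refine ContDiffAt.prodMk (ContDiffAt.div (by fun_prop) (ContDiffAt.add (by fun_prop) hD) ?_)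
      (ContDiffAt.div (by fun_prop) (ContDiffAt.add (by fun_prop) hD) ?_) <;>
    · simp only
      rw [hrad, Real.sqrt_sq p3.le]
      nlinarith
end

section
/- Let δ > 0, τ > 0, N, M ∈ ℕ, and let f_i : [0,1] → [δ, 1−δ] (1 ≤ i ≤ N) and g_j : [0,1] → [δ, 1−δ] (1 ≤ j ≤ M) be 1-Lipschitz functions such that for all (x,y) ∈ [0,1]², Σ_{i=1}^N χ_{{|f_i(x)−y|<δ}}(x,y) ≤ 1 and Σ_{j=1}^M χ_{{|g_j(y)−x|<δ}}(x,y) ≤ 1. Define φ = (φ₁, φ₂) : [0,1]² → ℝ² by φ₂(x,y) = (1 − 4δNτ)y + 2τ Σ_{i=1}^N [min(2δ, y − f_i(x) + δ) − min(0, y − f_i(x) + δ)] and φ₁(x,y) = (1 − 4δMτ)x + 2τ Σ_{j=1}^M [min(2δ, x − g_j(y) + δ) − min(0, x − g_j(y) + δ)]. Let S := (⋃_{i=1}^N {|f_i(x)−y| < δ}) ∪ (⋃_{j=1}^M {|g_j(y)−x| < δ}). Then φ is Lipschitz, at almost every point of [0,1]² \ S one has ∇φ = diag(1 − 4δMτ,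 1 − 4δNτ); and if in addition 2δ(M+N) + 8τδ(M+N) ≤ 1/2, then det ∇φ ≥ 1 + τ at almost every point of S and det ∇φ ≥ 1 − 4τδ(M+N) almost everywhere in [0,1]². -/
/-!
Each `f_i`, `g_j` is first replaced by a globally `1`-Lipschitz extension, so that `φ` agrees on
`[0,1]²` with a globally Lipschitz map and the strips become open sets. The ramp
`t ↦ min (2δ) t - min 0 t` has slope `1` on `(0, 2δ)` and slope `0` off `[0, 2δ]`. By Rademacher's
theorem and Fubini, almost every point of the square is interior, is a point of differentiability
of all `f_i`, `g_j`, and lies on none of the strip boundaries `|f_i(x) - y| = δ`,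
`|g_j(y) - x| = δ`. At such a point at most one strip in each direction is active, so each
component of `φ` has derivative either `a • L` or `a • L + 2τ • (L - d • K)` with `|d| ≤ 1`, where
`L`, `K` are the two coordinate projections (`hasFDerivAt_stripSum`). With
`a = 1 - 4δMτ` and `b = 1 - 4δNτ` the determinant is therefore `ab`, `(a + 2τ) b`, `a (b + 2τ)`, or
`(a + 2τ)(b + 2τ) - 4τ² d d'`, and the bounds are elementary inequalities.
-/

open MeasureTheory Set
open scoped ENNReal NNReal

section StretchingMap

/-- The ramp `t ↦ min (2δ) t - min 0 t` composed with `h` has derivative `h'` where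
`0 < h < 2δ`, and derivative `0` where `h` lies outside `[0, 2δ]`. -/
lemma hasFDerivAt_ramp {E : Type*} [NormedAddCommGroup E] [NormedSpace ℝ E] {δ : ℝ} (hδ : 0 < δ)
    {h : E → ℝ} {h' : E →L[ℝ] ℝ} {p : E} (hh : HasFDerivAt h h' p) :
    (0 < h p → h p < 2 * δ →
      HasFDerivAt (fun q => min (2 * δ) (h q) - min 0 (h q)) h' p) ∧
    (h p < 0 ∨ 2 * δ < h p →
      HasFDerivAt (fun q => min (2 * δ) (h q) - min 0 (h q)) (0 : E →L[ℝ] ℝ) p) := by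
  have hc := hh.continuousAt
  refine ⟨fun h0 h2 => ?_, ?_⟩
  · refine hh.congr_of_eventuallyEq ?_
    filter_upwards [hc.eventually (lt_mem_nhds h0), hc.eventually (gt_mem_nhds h2)] with q h1 h2
    rw [min_eq_right h2.le, min_eq_left h1.le, sub_zero]
  · rintro (h0 | h2)
    · refine (hasFDerivAt_const (0 : ℝ) p).congr_of_eventuallyEq ?_
      filter_upwards [hc.eventually (gt_mem_nhds h0)] with q h1
      rw [min_eq_right (by linarith), min_eq_right h1.le, sub_self]
    · refine (hasFDerivAt_const (2 * δ) p).congr_of_eventuallyEq ?_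
      filter_upwards [hc.eventually (lt_mem_nhds h2)] with q h1
      rw [min_eq_left h1.le, min_eq_left (by linarith), sub_zero]

/-- Derivative of the sum of ramps over one family of strips, at a point off all strip boundaries
and in at most one strip. Here `L` is the coordinate being stretched and `K` is the coordinate on
which the centre lines of the strips depend. -/
lemma hasFDerivAt_stripSum {n : ℕ} {δ : ℝ} (hδ : 0 < δ) (F : Fin n → ℝ → ℝ)
    (hF : ∀ i, LipschitzWith 1 (F i)) (L K : ℝ × ℝ →L[ℝ] ℝ) (p : ℝ × ℝ)
    (hd : ∀ i, DifferentiableAt ℝ (F i) (K p)) (hne : ∀ i, |F i (K p) - L p| ≠ δ)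
    (huniq : ∀ i i', |F i (K p) - L p| < δ → |F i' (K p) - L p| < δ → i = i') :
    ((¬ ∃ i, |F i (K p) - L p| < δ) →
      HasFDerivAt (fun q => ∑ i, (min (2 * δ) (L q - F i (K q) + δ)
        - min 0 (L q - F i (K q) + δ))) (0 : ℝ × ℝ →L[ℝ] ℝ) p) ∧
    ((∃ i, |F i (K p) - L p| < δ) → ∃ d : ℝ, |d| ≤ 1 ∧
      HasFDerivAt (fun q => ∑ i, (min (2 * δ) (L q - F i (K q) + δ)
        - min 0 (L q - F i (K q) + δ))) (L - d • K) p) := by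
  have hh : ∀ i, HasFDerivAt (fun q => L q - F i (K q) + δ) (L - deriv (F i) (K p) • K) p := by
    intro i
    exact (L.hasFDerivAt.sub
      ((hd i).hasDerivAt.comp_hasFDerivAt p K.hasFDerivAt)).add_const δ
  have hout : ∀ i, ¬ |F i (K p) - L p| < δ →
      HasFDerivAt (fun q => min (2 * δ) (L q - F i (K q) + δ) - min 0 (L q - F i (K q) + δ))
        (0 : ℝ × ℝ →L[ℝ] ℝ) p := by
    intro i hi
    refine (hasFDerivAt_ramp hδ (hh i)).2 ?_
    have : δ < |F i (K p) - L p| := lt_of_le_of_ne (not_lt.1 hi) (hne i).symm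
    rcases lt_abs.1 this with h | h
    · left; linarith
    · right; linarith
  constructor
  · intro hno
    push Not at hno
    simpa using HasFDerivAt.fun_sum (u := Finset.univ)
      fun i _ => hout i (not_lt.2 (hno i))
  · rintro ⟨i, hi⟩
    refine ⟨deriv (F i) (K p), ?_, ?_⟩
    · simpa using norm_deriv_le_of_lipschitz (x₀ := K p) (hF i)
    · have key : ∀ k ∈ (Finset.univ : Finset (Fin n)),
          HasFDerivAt (fun q => min (2 * δ) (L q - F k (K q) + δ) - min 0 (L q - F k (K q) + δ))
            (if k = i then L - deriv (F i) (K p) • K else 0) p := by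
        intro k _
        split_ifs with hk
        · subst hk
          obtain ⟨h1, h2⟩ := abs_lt.1 hi
          exact (hasFDerivAt_ramp hδ (hh k)).1 (by linarith) (by linarith)
        · exact hout k fun h => hk (huniq _ _ h hi)
      simpa using HasFDerivAt.fun_sum key

lemma exists_lipschitzWith_stripSum {n : ℕ} (δ a c : ℝ) (F : Fin n → ℝ → ℝ)
    (hF : ∀ i, LipschitzWith 1 (F i)) (L K : ℝ × ℝ →L[ℝ] ℝ) :
    ∃ C, LipschitzWith C (fun q => a * L q + c * ∑ i, (min (2 * δ) (L q - F i (K q) + δ)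
      - min 0 (L q - F i (K q) + δ))) := by
  have hsum : ∀ s : Finset (Fin n), ∃ C, LipschitzWith C (fun q =>
      ∑ i ∈ s, (min (2 * δ) (L q - F i (K q) + δ) - min 0 (L q - F i (K q) + δ))) := by
    intro s
    induction s using Finset.induction_on with
    | empty => exact ⟨0, by simp⟩
    | insert i s his ih =>
      obtain ⟨C, hC⟩ := ih
      have h := (L.lipschitz.sub ((hF i).comp K.lipschitz)).add (LipschitzWith.const δ)
      have h' := ((h.const_min (2 * δ)).sub (h.const_min 0)).add hC
      simp only [Finset.sum_insert his]
      exact ⟨_, h'⟩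
  obtain ⟨C, hC⟩ := hsum Finset.univ
  exact ⟨_, ((lipschitzWith_smul a).comp L.lipschitz).add ((lipschitzWith_smul c).comp hC)⟩

/-- The boundary of a strip around a continuous graph is Lebesgue-null, since its vertical
sections have at most two points. -/
lemma ae_abs_sub_ne {F : ℝ → ℝ} (hF : Continuous F) (δ : ℝ) :
    ∀ᵐ p : ℝ × ℝ, |F p.1 - p.2| ≠ δ := by
  have hm : MeasurableSet {p : ℝ × ℝ | |F p.1 - p.2| = δ} :=
    (isClosed_eq (by fun_prop) continuous_const).measurableSet
  have h0 : volume {p : ℝ × ℝ | |F p.1 - p.2| = δ} = 0 := by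
    rw [Measure.volume_eq_prod, Measure.measure_prod_null hm]
    refine Filter.Eventually.of_forall fun x => ?_
    refine Set.Countable.measure_zero (Set.Finite.countable ?_) _
    refine (Set.toFinite {F x - δ, F x + δ}).subset fun y hy => ?_
    have hy : |F x - y| = δ := hy
    rcases abs_choice (F x - y) with h | h
    · left; linarith
    · right; simp only [mem_singleton_iff]; linarith
  exact measure_eq_zero_iff_ae_notMem.1 h0

lemma det_prod_coord (a b c d : ℝ) :
    ((a • ContinuousLinearMap.fst ℝ ℝ ℝ + b • ContinuousLinearMap.snd ℝ ℝ ℝ).prod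
      (c • ContinuousLinearMap.fst ℝ ℝ ℝ + d • ContinuousLinearMap.snd ℝ ℝ ℝ)).det
      = a * d - b * c := by
  rw [← Matrix.toLin_finTwoProd_toContinuousLinearMap, LinearMap.det_toContinuousLinearMap,
    LinearMap.det_toLin, Matrix.det_fin_two_of]

end StretchingMap

/-- **The explicit stretching map associated with a family of disjoint Lipschitz strips.**
Given `1`-Lipschitz functions `f_i, g_j : [0,1] → [δ, 1−δ]` whose open strips of half-width
`δ` are pairwise disjoint (separately in each direction), the map
`φ₂(x,y) = (1 − 4δNτ) y + 2τ Σᵢ [min(2δ, y − f_i(x) + δ) − min(0, y − f_i(x) + δ)]`,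
`φ₁(x,y) = (1 − 4δMτ) x + 2τ Σⱼ [min(2δ, x − g_j(y) + δ) − min(0, x − g_j(y) + δ)]`
is Lipschitz on `[0,1]²`, has derivative `diag(1 − 4δMτ, 1 − 4δNτ)` a.e. outside the union
`S` of the strips, and — provided `2δ(M+N) + 8τδ(M+N) ≤ 1/2` — satisfies
`det ∇φ ≥ 1 + τ` a.e. on `S` and `det ∇φ ≥ 1 − 4τδ(M+N)` a.e. on `[0,1]²`. -/
theorem explicit_stretching_map
    (δ τ : ℝ) (hδ : 0 < δ) (hτ : 0 < τ) (N M : ℕ)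
    (f : Fin N → ℝ → ℝ) (g : Fin M → ℝ → ℝ)
    (hfl : ∀ i, LipschitzOnWith 1 (f i) (Set.Icc 0 1))
    (hgl : ∀ j, LipschitzOnWith 1 (g j) (Set.Icc 0 1))
    (hfr : ∀ i, ∀ x ∈ Set.Icc (0:ℝ) 1, f i x ∈ Set.Icc δ (1 - δ))
    (hgr : ∀ j, ∀ y ∈ Set.Icc (0:ℝ) 1, g j y ∈ Set.Icc δ (1 - δ))
    (hfd : ∀ x ∈ Set.Icc (0:ℝ) 1, ∀ y ∈ Set.Icc (0:ℝ) 1,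
      ∀ i i' : Fin N, |f i x - y| < δ → |f i' x - y| < δ → i = i')
    (hgd : ∀ y ∈ Set.Icc (0:ℝ) 1, ∀ x ∈ Set.Icc (0:ℝ) 1,
      ∀ j j' : Fin M, |g j y - x| < δ → |g j' y - x| < δ → j = j')
    (φ : ℝ × ℝ → ℝ × ℝ)
    (hφ : ∀ x y : ℝ, φ (x, y) =
      ((1 - 4 * δ * (M : ℝ) * τ) * x +
          2 * τ * ∑ j : Fin M, (min (2 * δ) (x - g j y + δ) - min 0 (x - g j y + δ)),
       (1 - 4 * δ * (N : ℝ) * τ) * y +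
          2 * τ * ∑ i : Fin N, (min (2 * δ) (y - f i x + δ) - min 0 (y - f i x + δ))))
    (S : Set (ℝ × ℝ))
    (hS : S = {p : ℝ × ℝ | (∃ i, |f i p.1 - p.2| < δ) ∨ ∃ j, |g j p.2 - p.1| < δ}) :
    (∃ Kφ : ℝ≥0, LipschitzOnWith Kφ φ (Set.Icc 0 1 ×ˢ Set.Icc 0 1)) ∧
    (∀ᵐ p ∂(volume.restrict ((Set.Icc 0 1 ×ˢ Set.Icc 0 1 : Set (ℝ × ℝ)) \ S)),
      fderiv ℝ φ p =
        ((1 - 4 * δ * (M : ℝ) * τ) • ContinuousLinearMap.fst ℝ ℝ ℝ).prod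
          ((1 - 4 * δ * (N : ℝ) * τ) • ContinuousLinearMap.snd ℝ ℝ ℝ)) ∧
    (2 * δ * ((M : ℝ) + N) + 8 * τ * δ * ((M : ℝ) + N) ≤ 1 / 2 →
      (∀ᵐ p ∂(volume.restrict ((Set.Icc 0 1 ×ˢ Set.Icc 0 1 : Set (ℝ × ℝ)) ∩ S)),
        1 + τ ≤ (fderiv ℝ φ p).det) ∧
      (∀ᵐ p ∂(volume.restrict (Set.Icc 0 1 ×ˢ Set.Icc 0 1 : Set (ℝ × ℝ))),
        1 - 4 * τ * δ * ((M : ℝ) + N) ≤ (fderiv ℝ φ p).det)) := by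
  choose F hF hFeq using fun i => (hfl i).extend_real
  choose G hG hGeq using fun j => (hgl j).extend_real
  set Q : Set (ℝ × ℝ) := Set.Icc 0 1 ×ˢ Set.Icc 0 1 with hQ
  have hQm : MeasurableSet Q := measurableSet_Icc.prod measurableSet_Icc
  set a : ℝ := 1 - 4 * δ * (M : ℝ) * τ with ha
  set b : ℝ := 1 - 4 * δ * (N : ℝ) * τ with hb
  let L := ContinuousLinearMap.fst ℝ ℝ ℝ
  let K := ContinuousLinearMap.snd ℝ ℝ ℝ
  -- `ψ` is the map built from the extensions; it coincides with `φ` on the square.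
  let ψ₁ : ℝ × ℝ → ℝ := fun q => a * L q +
    2 * τ * ∑ j, (min (2 * δ) (L q - G j (K q) + δ) - min 0 (L q - G j (K q) + δ))
  let ψ₂ : ℝ × ℝ → ℝ := fun q => b * K q +
    2 * τ * ∑ i, (min (2 * δ) (K q - F i (L q) + δ) - min 0 (K q - F i (L q) + δ))
  have hφψ : EqOn φ (fun q => (ψ₁ q, ψ₂ q)) Q := by
    rintro ⟨x, y⟩ ⟨hx, hy⟩
    have e1 : ∀ j, g j y = G j y := fun j => hGeq j hy
    have e2 : ∀ i, f i x = F i x := fun i => hFeq i hx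
    simp only [hφ, e1, e2]
    rfl
  have hQS : Q ∩ S = Q ∩ {p | (∃ i, |F i p.1 - p.2| < δ) ∨ ∃ j, |G j p.2 - p.1| < δ} := by
    ext ⟨x, y⟩
    refine and_congr_right fun ⟨hx, hy⟩ => ?_
    have e1 : ∀ j, g j y = G j y := fun j => hGeq j hy
    have e2 : ∀ i, f i x = F i x := fun i => hFeq i hx
    simp only [hS, mem_ofPred_eq, e1, e2]
  have hFc : ∀ i, Continuous (F i) := fun i => (hF i).continuous
  have hGc : ∀ j, Continuous (G j) := fun j => (hG j).continuous
  have hQSm : MeasurableSet (Q ∩ S) := by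
    rw [hQS]
    refine hQm.inter (IsOpen.measurableSet ?_)
    simp only [ofPred_or, ofPred_exists]
    refine (isOpen_iUnion fun i => isOpen_lt ?_ continuous_const).union
      (isOpen_iUnion fun j => isOpen_lt ?_ continuous_const)
    · have := hFc i
      fun_prop
    · have := hGc j
      fun_prop
  have hQSm' : MeasurableSet (Q \ S) := by
    rw [← sdiff_self_inter]
    exact hQm.diff hQSm
  -- The four possible forms of the derivative, valid at almost every point of the square.
  have hae : ∀ᵐ p : ℝ × ℝ, p ∈ Q →
      (p ∉ S → fderiv ℝ φ p = (a • L).prod (b • K)) ∧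
      (p ∈ S → (fderiv ℝ φ p).det = (a + 2 * τ) * b ∨ (fderiv ℝ φ p).det = a * (b + 2 * τ) ∨
        ∃ d e : ℝ, |d| ≤ 1 ∧ |e| ≤ 1 ∧
          (fderiv ℝ φ p).det = (a + 2 * τ) * (b + 2 * τ) - 4 * τ ^ 2 * (d * e)) := by
    have hint : ∀ᵐ p : ℝ × ℝ, p ∈ Q → Q ∈ nhds p := by
      have hconv : Convex ℝ Q := (convex_Icc 0 1).prod (convex_Icc 0 1)
      filter_upwards [measure_eq_zero_iff_ae_notMem.1 (hconv.addHaar_frontier volume)]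
        with p hp hpQ
      by_contra hcon
      exact hp ⟨subset_closure hpQ, fun h => hcon (mem_interior_iff_mem_nhds.1 h)⟩
    have hFd : ∀ᵐ p : ℝ × ℝ, ∀ i, DifferentiableAt ℝ (F i) p.1 :=
      ae_all_iff.2 fun i => Measure.quasiMeasurePreserving_fst.ae (hF i).ae_differentiableAt_real
    have hGd : ∀ᵐ p : ℝ × ℝ, ∀ j, DifferentiableAt ℝ (G j) p.2 :=
      ae_all_iff.2 fun j => Measure.quasiMeasurePreserving_snd.ae (hG j).ae_differentiableAt_real
    have hFn : ∀ᵐ p : ℝ × ℝ, ∀ i, |F i p.1 - p.2| ≠ δ :=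
      ae_all_iff.2 fun i => ae_abs_sub_ne (hFc i) δ
    have hGn : ∀ᵐ p : ℝ × ℝ, ∀ j, |G j p.2 - p.1| ≠ δ :=
      ae_all_iff.2 fun j =>
        (Measure.measurePreserving_swap (μ := (volume : Measure ℝ))
          (ν := (volume : Measure ℝ))).quasiMeasurePreserving.ae (ae_abs_sub_ne (hGc j) δ)
    filter_upwards [hint, hFd, hGd, hFn, hGn] with p hpi hFd hGd hFn hGn hpQ
    obtain ⟨hx, hy⟩ := id hpQ
    have hfder : ∀ A : ℝ × ℝ →L[ℝ] ℝ × ℝ, HasFDerivAt (fun q => (ψ₁ q, ψ₂ q)) A p →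
        fderiv ℝ φ p = A := fun A hA =>
      (hA.congr_of_eventuallyEq (Filter.eventuallyEq_of_mem (hpi hpQ) hφψ)).fderiv
    have hpS : p ∈ S ↔ (∃ i, |F i p.1 - p.2| < δ) ∨ ∃ j, |G j p.2 - p.1| < δ := by
      have := Set.ext_iff.1 hQS p
      simpa [hpQ] using this
    have e1 : ∀ j, g j p.2 = G j p.2 := fun j => hGeq j hy
    have e2 : ∀ i, f i p.1 = F i p.1 := fun i => hFeq i hx
    obtain ⟨hG0, hG1⟩ := hasFDerivAt_stripSum hδ G hG L K p hGd hGn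
      (fun j j' h h' => hgd p.2 hy p.1 hx j j' ((e1 j).symm ▸ h) ((e1 j').symm ▸ h'))
    obtain ⟨hF0, hF1⟩ := hasFDerivAt_stripSum hδ F hF K L p hFd hFn
      (fun i i' h h' => hfd p.1 hx p.2 hy i i' ((e2 i).symm ▸ h) ((e2 i').symm ▸ h'))
    have h1 : ∀ A, HasFDerivAt (fun q => ∑ j, (min (2 * δ) (L q - G j (K q) + δ)
        - min 0 (L q - G j (K q) + δ))) A p → HasFDerivAt ψ₁ (a • L + (2 * τ) • A) p :=
      fun A hA => (L.hasFDerivAt.const_mul a).add (hA.const_mul (2 * τ))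
    have h2 : ∀ A, HasFDerivAt (fun q => ∑ i, (min (2 * δ) (K q - F i (L q) + δ)
        - min 0 (K q - F i (L q) + δ))) A p → HasFDerivAt ψ₂ (b • K + (2 * τ) • A) p :=
      fun A hA => (K.hasFDerivAt.const_mul b).add (hA.const_mul (2 * τ))
    refine ⟨fun hnS => ?_, fun hpS' => ?_⟩
    · rw [hpS, not_or] at hnS
      rw [hfder _ ((h1 _ (hG0 hnS.2)).prodMk (h2 _ (hF0 hnS.1)))]
      simp
    · by_cases hFp : ∃ i, |F i p.1 - p.2| < δ
      · obtain ⟨d, hd, hdF⟩ := hF1 hFp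
        by_cases hGp : ∃ j, |G j p.2 - p.1| < δ
        · obtain ⟨e, he, heG⟩ := hG1 hGp
          refine Or.inr (Or.inr ⟨d, e, hd, he, ?_⟩)
          rw [hfder _ ((h1 _ heG).prodMk (h2 _ hdF))]
          convert det_prod_coord (a + 2 * τ) (-(2 * τ * e)) (-(2 * τ * d)) (b + 2 * τ) using 2
          · congr 1 <;> module
          · ring
        · refine Or.inr (Or.inl ?_)
          rw [hfder _ ((h1 _ (hG0 hGp)).prodMk (h2 _ hdF))]
          convert det_prod_coord a 0 (-(2 * τ * d)) (b + 2 * τ) using 2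
          · congr 1 <;> module
          · ring
      · have hGp : ∃ j, |G j p.2 - p.1| < δ := (hpS.1 hpS').resolve_left hFp
        obtain ⟨e, he, heG⟩ := hG1 hGp
        refine Or.inl ?_
        rw [hfder _ ((h1 _ heG).prodMk (h2 _ (hF0 hFp)))]
        convert det_prod_coord (a + 2 * τ) (-(2 * τ * e)) 0 b using 2
        · congr 1 <;> module
        · ring
  refine ⟨?_, ?_, fun hsmall => ?_⟩
  · obtain ⟨C₁, hC₁⟩ := exists_lipschitzWith_stripSum δ a (2 * τ) G hG L K
    obtain ⟨C₂, hC₂⟩ := exists_lipschitzWith_stripSum δ b (2 * τ) F hF K L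
    refine ⟨max C₁ C₂, fun p hp q hq => ?_⟩
    rw [hφψ hp, hφψ hq]
    exact hC₁.prodMk hC₂ p q
  · rw [ae_restrict_iff' hQSm']
    filter_upwards [hae] with p hp hpQ
    exact (hp hpQ.1).1 hpQ.2
  · have hM : (0 : ℝ) ≤ δ * M := by positivity
    have hN : (0 : ℝ) ≤ δ * N := by positivity
    have hτM : (0 : ℝ) ≤ τ * (δ * M) := by positivity
    have hτN : (0 : ℝ) ≤ τ * (δ * N) := by positivity
    have hMN : (0 : ℝ) ≤ τ * (δ * M) * (τ * (δ * N)) := by positivity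
    -- On `S` the gain `2τ` beats the loss `4τδ(M+N)` because `4δ(M+N) + 8τδ(M+N) ≤ 1`.
    have hdetS : ∀ᵐ p : ℝ × ℝ, p ∈ Q → p ∈ S → 1 + τ ≤ (fderiv ℝ φ p).det := by
      filter_upwards [hae] with p hp hpQ hpS
      have hbud : 0 ≤ τ * (1 - 4 * (δ * M + δ * N) - 8 * (τ * (δ * M) + τ * (δ * N))) :=
        mul_nonneg hτ.le (by nlinarith)
      have hq1 : 0 ≤ τ * (τ * (δ * M)) := by positivity
      have hq2 : 0 ≤ τ * (τ * (δ * N)) := by positivity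
      rcases (hp hpQ).2 hpS with h | h | ⟨d, e, hd, he, h⟩
      · rw [h, ha, hb]; nlinarith
      · rw [h, ha, hb]; nlinarith
      · have hde : d * e ≤ 1 := by
          have := mul_le_mul hd he (abs_nonneg e) zero_le_one
          rw [← abs_mul, one_mul] at this
          exact (le_abs_self _).trans this
        have h4 : 4 * τ ^ 2 * (d * e) ≤ 4 * τ ^ 2 := by nlinarith [sq_nonneg τ]
        rw [h, ha, hb]; nlinarith
    refine ⟨?_, ?_⟩
    · rw [ae_restrict_iff' hQSm]
      filter_upwards [hdetS] with p hp hpQ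
      exact hp hpQ.1 hpQ.2
    · rw [ae_restrict_iff' hQm]
      filter_upwards [hae, hdetS] with p hp hpS hpQ
      by_cases h : p ∈ S
      · have := hpS hpQ h
        nlinarith
      · have hdet := det_prod_coord a 0 0 b
        simp only [zero_smul, add_zero, zero_add] at hdet
        rw [(hp hpQ).1 h, hdet, ha, hb]
        nlinarith
end
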